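/- arXiv:1808.06513 — 4 statements merged into one kernel-verified Lean document; each statement's English description precedes it below -/
import Mathlib

section
/- Let E ⊆ ℝ⁴ = ℍ×ℝ be precisely monotone. Assume the origin (0,0,0,0) ∈ ∂E and that (p,q,0,0) ∈ Int(E) for some (p,q) ≠ (0,0). Then there exist an open neighborhood Ω of the origin in ℝ⁴ and real numbers r, s, c, b with rp + sq ≠ 0 such that ∂E ∩ Ω = {(x,y,u,t) ∈ ℝ⁴ : rx + sy + cu + bt = 0} ∩ Ω. -/
/- The group `ℍ×ℝ`: `ℝ⁴` with coordinates `(x,y,u,t)` and law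
`(x,y,u,t)·(x',y',u',t') = (x+x', y+y', u+u', t+t'+2(yx'−y'x))`. -/

noncomputable section

/-- Group law of `ℍ×ℝ` on `ℝ⁴`. -/
def hmul (p q : Fin 4 → ℝ) : Fin 4 → ℝ :=
  ![p 0 + q 0, p 1 + q 1, p 2 + q 2, p 3 + q 3 + 2 * (p 1 * q 0 - q 1 * p 0)]

/-- Horizontal convexity in `ℍ×ℝ`. -/
def HRConvex (C : Set (Fin 4 → ℝ)) : Prop :=
  ∀ p ∈ C, ∀ a b c : ℝ, hmul p ![a, b, c, 0] ∈ C →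
    ∀ s : ℝ, 0 ≤ s → s ≤ 1 → hmul p ![s * a, s * b, s * c, 0] ∈ C

/-- Precise monotonicity in `ℍ×ℝ`. -/
def PreciselyMonotone (E : Set (Fin 4 → ℝ)) : Prop := HRConvex E ∧ HRConvex Eᶜ


structure HH (F : ℝ → ℝ → ℝ → Prop) (ψ : ℝ → ℝ → ℝ) (M ρ : ℝ) : Prop where
  hM : 1 ≤ M
  hρ : 0 < ρ
  c1 : ∀ S a T y1 y2 y3 : ℝ, 0 < (y2 - y1) * (y3 - y2) →
    F (S + a * y1) y1 (T + 2 * S * y1 + a * y1 ^ 2) →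
    F (S + a * y3) y3 (T + 2 * S * y3 + a * y3 ^ 2) →
    F (S + a * y2) y2 (T + 2 * S * y2 + a * y2 ^ 2)
  c2 : ∀ S a T y1 y2 y3 : ℝ, 0 < (y2 - y1) * (y3 - y2) →
    ¬ F (S + a * y1) y1 (T + 2 * S * y1 + a * y1 ^ 2) →
    ¬ F (S + a * y3) y3 (T + 2 * S * y3 + a * y3 ^ 2) →
    ¬ F (S + a * y2) y2 (T + 2 * S * y2 + a * y2 ^ 2)
  hb : ∀ y θ : ℝ, |y| < ρ → |θ| < ρ → |ψ y θ| ≤ M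
  hu : ∀ y θ s : ℝ, |y| < ρ → |θ| < ρ → ψ y θ < s → F s y θ
  hl : ∀ y θ s : ℝ, |y| < ρ → |θ| < ρ → s < ψ y θ → ¬ F s y θ

namespace HH

variable {F : ℝ → ℝ → ℝ → Prop} {ψ : ℝ → ℝ → ℝ} {M ρ : ℝ}

theorem dual (h : HH F ψ M ρ) :
    HH (fun s y θ => ¬ F (-s) y (-θ)) (fun y θ => -ψ y (-θ)) M ρ where
  hM := h.hM
  hρ := h.hρ
  c1 := by
    intro S a T y1 y2 y3 hb h1 h3
    have := h.c2 (-S) (-a) (-T) y1 y2 y3 hb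
    have e : ∀ y : ℝ, -S + -a * y = -(S + a * y) := by intro y; ring
    have e' : ∀ y : ℝ, -T + 2 * -S * y + -a * y ^ 2 = -(T + 2 * S * y + a * y ^ 2) := by
      intro y; ring
    simp only [e, e'] at this
    exact this h1 h3
  c2 := by
    intro S a T y1 y2 y3 hb h1 h3
    have := h.c1 (-S) (-a) (-T) y1 y2 y3 hb
    have e : ∀ y : ℝ, -S + -a * y = -(S + a * y) := by intro y; ring
    have e' : ∀ y : ℝ, -T + 2 * -S * y + -a * y ^ 2 = -(T + 2 * S * y + a * y ^ 2) := by
      intro y; ring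
    simp only [e, e'] at this
    intro hn
    exact hn (this (not_not.1 h1) (not_not.1 h3))
  hb := by
    intro y θ hy hθ
    rw [abs_neg]
    exact h.hb y (-θ) hy (by rwa [abs_neg])
  hu := by
    intro y θ s hy hθ hs
    exact h.hl y (-θ) (-s) hy (by rwa [abs_neg]) (by linarith)
  hl := by
    intro y θ s hy hθ hs hn
    exact hn (h.hu y (-θ) (-s) hy (by rwa [abs_neg]) (by linarith))

theorem tri1 (h : HH F ψ M ρ) {s1 y1 t1 s2 y2 t2 s3 y3 t3 : ℝ}
    (hb : 0 < (y2 - y1) * (y3 - y2)) (e1 : t2 - t1 = (y2 - y1) * (s1 + s2))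
    (e2 : t3 - t2 = (y3 - y2) * (s2 + s3))
    (e3 : (s3 - s2) * (y2 - y1) = (s2 - s1) * (y3 - y2))
    (h1 : F s1 y1 t1) (h3 : F s3 y3 t3) : F s2 y2 t2 := by
  have hne : y2 - y1 ≠ 0 := fun h0 => by rw [h0] at hb; simp at hb
  obtain ⟨a, ha⟩ : ∃ a, a * (y2 - y1) = s2 - s1 := ⟨(s2 - s1) / (y2 - y1), by field_simp⟩
  have ha3 : s3 - s2 = a * (y3 - y2) := by
    apply mul_right_cancel₀ hne
    rw [e3, ← ha]; ring
  have := h.c1 (s1 - a * y1) a (t1 - 2 * (s1 - a * y1) * y1 - a * y1 ^ 2) y1 y2 y3 hb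
  have E1 : s1 - a * y1 + a * y1 = s1 := by ring
  have E2 : s1 - a * y1 + a * y2 = s2 := by linarith
  have E3 : s1 - a * y1 + a * y3 = s3 := by linarith
  have hs2 : s2 = s1 + a * (y2 - y1) := by linarith
  have hs3 : s3 = s1 + a * (y3 - y1) := by linarith
  have E4 : t1 - 2 * (s1 - a * y1) * y1 - a * y1 ^ 2 + 2 * (s1 - a * y1) * y1 + a * y1 ^ 2 = t1 := by
    ring
  have E5 : t1 - 2 * (s1 - a * y1) * y1 - a * y1 ^ 2 + 2 * (s1 - a * y1) * y2 + a * y2 ^ 2 = t2 := by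
    have : t2 = t1 + (y2 - y1) * (s1 + s2) := by linarith
    rw [this, hs2]; ring
  have E6 : t1 - 2 * (s1 - a * y1) * y1 - a * y1 ^ 2 + 2 * (s1 - a * y1) * y3 + a * y3 ^ 2 = t3 := by
    have : t3 = t1 + (y2 - y1) * (s1 + s2) + (y3 - y2) * (s2 + s3) := by linarith
    rw [this, hs2, hs3]; ring
  rw [E1, E2, E3, E4, E5, E6] at this
  exact this h1 h3

theorem star (h : HH F ψ M ρ) {y1 t1 y2 t2 σ η : ℝ} (hη : 0 < η)
    (a1 : |y1| < ρ / 2) (a2 : |t1| < ρ / 2) (a3 : |y2| < ρ / 2) (a4 : |t2| < ρ / 2)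
    (e : t2 - t1 = (y2 - y1) * σ) (hd : 32 * (M + 1) ^ 2 * |y2 - y1| ≤ ρ * η)
    (h1 : ψ y1 t1 + ψ y2 t2 < σ) (h2 : σ < 2 * ψ y2 t2 - η) : False := by
  have hM := h.hM
  have hρ := h.hρ
  have hne : y2 - y1 ≠ 0 := by
    intro h0
    have hy : y2 = y1 := by linarith
    have ht : t2 = t1 := by rw [h0] at e; linarith
    subst hy ht
    linarith
  have b2 := abs_le.1 (h.hb y2 t2 (by linarith) (by linarith))
  obtain ⟨ε, hε0, hε1, hε2, hε3⟩ : ∃ ε : ℝ, 0 < ε ∧ ε ≤ 1 ∧ ε ≤ η / 4 ∧ ε < σ - ψ y1 t1 - ψ y2 t2 := by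
    refine ⟨min 1 (min (η / 4) ((σ - ψ y1 t1 - ψ y2 t2) / 2)), ?_, ?_, ?_, ?_⟩
    · apply lt_min one_pos (lt_min (by linarith) (by linarith))
    · exact min_le_left _ _
    · exact (min_le_right _ _).trans (min_le_left _ _)
    · exact lt_of_le_of_lt ((min_le_right _ _).trans (min_le_right _ _)) (by linarith)
  set s2 := ψ y2 t2 - ε with hs2
  have hk : η / 2 ≤ 2 * s2 - σ := by linarith
  have hk0 : 0 < 2 * s2 - σ := by linarith
  set μ := (M + 1 - s2) / (2 * s2 - σ) with hμ
  have hμ0 : 0 < μ := div_pos (by linarith) hk0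
  have hμe : μ * (2 * s2 - σ) = M + 1 - s2 := by rw [hμ]; exact div_mul_cancel₀ _ hk0.ne'
  have hμη : μ * η ≤ 4 * (M + 1) := by nlinarith
  have hy : |μ * (y2 - y1)| ≤ ρ / (8 * (M + 1)) := by
    rw [abs_mul, abs_of_pos hμ0, le_div_iff₀ (by linarith)]
    have hA := abs_nonneg (y2 - y1)
    have : μ * (32 * (M + 1) ^ 2 * |y2 - y1|) ≤ μ * (ρ * η) := mul_le_mul_of_nonneg_left hd hμ0.le
    have h3 : μ * (ρ * η) ≤ ρ * (4 * (M + 1)) := by nlinarith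
    have h4 : (4 * (M + 1)) * (μ * |y2 - y1| * (8 * (M + 1))) ≤ (4 * (M + 1)) * ρ := by
      calc _ = μ * (32 * (M + 1) ^ 2 * |y2 - y1|) := by ring
        _ ≤ _ := this.trans h3
        _ = _ := by ring
    exact le_of_mul_le_mul_left h4 (by linarith)
  have hy' : |μ * (y2 - y1)| * (8 * (M + 1)) ≤ ρ := by
    rwa [le_div_iff₀ (by linarith)] at hy
  have hs : |s2 + (M + 1)| ≤ 2 * (M + 1) := by
    rw [abs_le]; constructor <;> linarith
  have F1 : F (σ - s2) y1 t1 := h.hu _ _ _ (by linarith) (by linarith) (by linarith)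
  have F2 : ¬ F s2 y2 t2 := h.hl _ _ _ (by linarith) (by linarith) (by linarith)
  have hA := abs_nonneg (μ * (y2 - y1))
  have B3 : |y2 + μ * (y2 - y1)| < ρ := by
    have := abs_add_le y2 (μ * (y2 - y1))
    nlinarith
  have B4 : |t2 + μ * (y2 - y1) * (s2 + (M + 1))| < ρ := by
    have := abs_add_le t2 (μ * (y2 - y1) * (s2 + (M + 1)))
    rw [abs_mul] at this
    have h5 : |μ * (y2 - y1)| * |s2 + (M + 1)| ≤ |μ * (y2 - y1)| * (2 * (M + 1)) :=
      mul_le_mul_of_nonneg_left hs hA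
    nlinarith
  have b3 := abs_le.1 (h.hb _ _ B3 B4)
  have F3 : F (M + 1) (y2 + μ * (y2 - y1)) (t2 + μ * (y2 - y1) * (s2 + (M + 1))) :=
    h.hu _ _ _ B3 B4 (by linarith)
  apply F2
  refine h.tri1 ?_ ?_ ?_ ?_ F1 F3
  · have : 0 < (y2 - y1) ^ 2 := by positivity
    nlinarith
  · rw [e]; ring
  · ring
  · have : M + 1 - s2 = μ * (2 * s2 - σ) := hμe.symm
    rw [this]; ring

theorem star' (h : HH F ψ M ρ) {y1 t1 y2 t2 σ η : ℝ} (hη : 0 < η)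
    (a1 : |y1| < ρ / 2) (a2 : |t1| < ρ / 2) (a3 : |y2| < ρ / 2) (a4 : |t2| < ρ / 2)
    (e : t2 - t1 = (y2 - y1) * σ) (hd : 32 * (M + 1) ^ 2 * |y2 - y1| ≤ ρ * η)
    (h1 : σ < ψ y1 t1 + ψ y2 t2) (h2 : 2 * ψ y2 t2 + η < σ) : False := by
  refine h.dual.star (y1 := y1) (t1 := -t1) (y2 := y2) (t2 := -t2) (σ := -σ) hη a1 ?_ a3 ?_ ?_ hd ?_ ?_
  · rwa [abs_neg]
  · rwa [abs_neg]
  · linarith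
  · simp only [neg_neg]; linarith
  · simp only [neg_neg]; linarith

open Filter Topology in
set_option maxHeartbeats 1000000 in
theorem cont (h : HH F ψ M ρ) {y t : ℝ} (hy : |y| < ρ / 2) (ht : |t| < ρ / 2) :
    ContinuousAt (fun w : ℝ × ℝ => ψ w.1 w.2) (y, t) := by
  have hM := h.hM
  have hρ := h.hρ
  set f : ℝ × ℝ → ℝ := fun w => ψ w.1 w.2 with hf
  have hbox : ∀ᶠ w : ℝ × ℝ in 𝓝 (y, t), |w.1| < ρ / 2 ∧ |w.2| < ρ / 2 := by
    have c1 : ContinuousAt (fun w : ℝ × ℝ => |w.1|) (y, t) := by fun_prop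
    have c2 : ContinuousAt (fun w : ℝ × ℝ => |w.2|) (y, t) := by fun_prop
    exact (c1.eventually (gt_mem_nhds hy)).and (c2.eventually (gt_mem_nhds ht))
  have hbd : ∀ᶠ w in 𝓝 (y, t), |f w| ≤ M := by
    filter_upwards [hbox] with w hw
    exact h.hb _ _ (by linarith [hw.1]) (by linarith [hw.2])
  have bu : IsBoundedUnder (· ≤ ·) (𝓝 (y, t)) f := ⟨M, by
    rw [eventually_map]; filter_upwards [hbd] with w hw using (abs_le.1 hw).2⟩
  have bl : IsBoundedUnder (· ≥ ·) (𝓝 (y, t)) f := ⟨-M, by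
    rw [eventually_map]; filter_upwards [hbd] with w hw using (abs_le.1 hw).1⟩
  have hle : liminf f (𝓝 (y, t)) ≤ limsup f (𝓝 (y, t)) := liminf_le_limsup bu bl
  set L := limsup f (𝓝 (y, t)) with hL
  set l := liminf f (𝓝 (y, t)) with hl
  rcases eq_or_lt_of_le hle with heq | hlt
  · have : Tendsto f (𝓝 (y, t)) (𝓝 L) := tendsto_of_liminf_eq_limsup heq rfl bu bl
    exact continuousAt_of_tendsto_nhds this
  exfalso
  set ε := (L - l) / 20 with hε
  have hε0 : 0 < ε := by rw [hε]; linarith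
  have hLl : L = l + 20 * ε := by rw [hε]; ring
  have ev1 : ∀ᶠ w in 𝓝 (y, t), f w < L + ε := eventually_lt_of_limsup_lt (by linarith) bu
  have ev2 : ∀ᶠ w in 𝓝 (y, t), l - ε < f w := eventually_lt_of_lt_liminf (by linarith) bl
  have fr1 : ∃ᶠ w in 𝓝 (y, t), L - ε < f w := frequently_lt_of_lt_limsup bl.isCoboundedUnder_le (by linarith)
  have fr2 : ∃ᶠ w in 𝓝 (y, t), f w < l + ε := frequently_lt_of_liminf_lt bu.isCoboundedUnder_ge (by linarith)
  obtain ⟨δ, hδ, hball⟩ := Metric.eventually_nhds_iff.1 (hbox.and (ev1.and ev2))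
  set δ1 := min δ (ρ * ε / (64 * (M + 1) ^ 2)) with hδ1
  have hδ1p : 0 < δ1 := by rw [hδ1]; apply lt_min hδ; positivity
  set σ2 := 2 * l + 10 * ε with hσ2
  set σ3 := L + l + 13 * ε with hσ3
  have hσ : σ3 - σ2 = 23 * ε := by rw [hσ2, hσ3, hLl]; ring
  -- candidate map
  obtain ⟨δ2, hδ2p, hδ2⟩ : ∃ δ2 > 0, δ2 ≤ δ1 ∧ (2 * δ2 + 2 * δ2 * |σ3|) / (23 * ε) * (1 + |σ2|) + δ2 < δ1 := by
    have c : ContinuousAt (fun d : ℝ => (2 * d + 2 * d * |σ3|) / (23 * ε) * (1 + |σ2|) + d) 0 := by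
      fun_prop
    have := c.eventually (eventually_lt_nhds (b := δ1) (by simpa using hδ1p))
    obtain ⟨r, hr, hr2⟩ := Metric.eventually_nhds_iff.1 this
    refine ⟨min (r / 2) δ1, lt_min (by linarith) hδ1p, min_le_right _ _, ?_⟩
    have hm : 0 < min (r / 2) δ1 := lt_min (by linarith) hδ1p
    apply hr2
    rw [Real.dist_eq, sub_zero, abs_of_pos hm]
    exact lt_of_le_of_lt (min_le_left _ _) (by linarith)
  have near : ∀ᶠ w in 𝓝 (y, t), dist w (y, t) < δ2 := Metric.eventually_nhds_iff.2 ⟨δ2, hδ2p, fun w hw => hw⟩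
  obtain ⟨wh, hwh1, hwh2⟩ := (fr1.and_eventually near).exists
  obtain ⟨wl, hwl1, hwl2⟩ := (fr2.and_eventually near).exists
  obtain ⟨yh, th⟩ := wh
  obtain ⟨yl, tl⟩ := wl
  have dd : ∀ {a b r : ℝ}, dist (a, b) (y, t) < r ↔ |a - y| < r ∧ |b - t| < r := by
    intro a b r
    rw [Prod.dist_eq, max_lt_iff, Real.dist_eq, Real.dist_eq]
  obtain ⟨dh1, dh2⟩ := dd.1 hwh2
  obtain ⟨dl1, dl2⟩ := dd.1 hwl2
  set e := -(th - tl + (yl - yh) * σ3) / (23 * ε) with he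
  have hee : e * (23 * ε) = -(th - tl + (yl - yh) * σ3) := by rw [he]; field_simp
  have heb : |e| ≤ (2 * δ2 + 2 * δ2 * |σ3|) / (23 * ε) := by
    rw [he, abs_div, abs_neg, abs_of_pos (show 0 < 23 * ε by linarith)]
    apply div_le_div_of_nonneg_right _ (by linarith)
    have h1 : |th - tl| ≤ 2 * δ2 := by
      rw [abs_lt] at *; rw [abs_le]; constructor <;> linarith
    have h2 : |yl - yh| ≤ 2 * δ2 := by
      rw [abs_lt] at *; rw [abs_le]; constructor <;> linarith
    calc _ ≤ |th - tl| + |(yl - yh) * σ3| := abs_add_le _ _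
      _ ≤ _ := by rw [abs_mul]; gcongr
  have hq : |e| * (1 + |σ2|) + δ2 < δ1 := by
    refine lt_of_le_of_lt ?_ hδ2.2
    gcongr
  have hq' : |e| + |e| * |σ2| + δ2 < δ1 := by
    have : |e| * (1 + |σ2|) = |e| + |e| * |σ2| := by ring
    linarith
  have hp1 := mul_nonneg (abs_nonneg e) (abs_nonneg σ2)
  have hp2 := abs_nonneg e
  have d21 : |yl + e - y| < δ1 := by
    have : |yl + e - y| ≤ |yl - y| + |e| := by
      rw [show yl + e - y = (yl - y) + e by ring]; exact abs_add_le _ _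
    linarith
  have d22 : |tl + e * σ2 - t| < δ1 := by
    have : |tl + e * σ2 - t| ≤ |tl - t| + |e| * |σ2| := by
      rw [show tl + e * σ2 - t = (tl - t) + e * σ2 by ring, ← abs_mul]; exact abs_add_le _ _
    linarith
  have l1 : δ1 ≤ δ := min_le_left _ _
  have l2 : 64 * (M + 1) ^ 2 * δ1 ≤ ρ * ε := by
    have : δ1 ≤ ρ * ε / (64 * (M + 1) ^ 2) := min_le_right _ _
    rw [le_div_iff₀ (by positivity)] at this
    linarith
  have dist2 : ∀ {a b : ℝ}, |a - y| < δ1 → |b - y| < δ1 → 32 * (M + 1) ^ 2 * |a - b| ≤ ρ * ε := by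
    intro a b ha hb
    have : |a - b| ≤ 2 * δ1 := by
      rw [abs_lt] at *; rw [abs_le]; constructor <;> linarith
    have h3 : 0 ≤ 32 * (M + 1) ^ 2 := by positivity
    have h4 := mul_le_mul_of_nonneg_left this h3
    linarith
  obtain ⟨⟨bh1, bh2⟩, uh, vh⟩ := @hball (yh, th) (dd.2 ⟨by linarith [hδ2.1], by linarith [hδ2.1]⟩)
  obtain ⟨⟨bl1, bl2⟩, ul, vl⟩ := @hball (yl, tl) (dd.2 ⟨by linarith [hδ2.1], by linarith [hδ2.1]⟩)
  obtain ⟨⟨b21, b22⟩, u2, v2⟩ := @hball (yl + e, tl + e * σ2) (dd.2 ⟨by linarith [hδ2.1], by linarith [hδ2.1]⟩)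
  simp only [hf] at *
  have key : ψ (yl + e) (tl + e * σ2) ≤ l + 11 * ε := by
    by_contra hcon
    push Not at hcon
    refine h.star' (y1 := yl + e) (t1 := tl + e * σ2) (y2 := yl) (t2 := tl) (σ := σ2) hε0 b21 b22 bl1 bl2 (by ring)
      (dist2 (by linarith) d21) (by linarith) (by linarith)
  refine h.star (y1 := yl + e) (t1 := tl + e * σ2) (y2 := yh) (t2 := th) (σ := σ3) hε0 b21 b22 bh1 bh2 ?_
      (dist2 (by linarith) d21) (by linarith) (by linarith)
  have : σ2 = σ3 - 23 * ε := by linarith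
  rw [this]
  linear_combination hee


end HH

namespace HH
variable {F : ℝ → ℝ → ℝ → Prop} {ψ : ℝ → ℝ → ℝ} {M ρ : ℝ}

def qd (S a T y : ℝ) : ℝ := T + 2 * S * y + a * y ^ 2

def On (ψ : ℝ → ℝ → ℝ) (ρ S a T y : ℝ) : Prop :=
  |y| < ρ / 2 ∧ |qd S a T y| < ρ / 2 ∧ ψ y (qd S a T y) = S + a * y

theorem qd_neg (S a T y : ℝ) : qd (-S) (-a) (-T) y = - qd S a T y := by
  unfold qd; ring

theorem On.dual {S a T y : ℝ} (h : On ψ ρ S a T y) :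
    On (fun y θ => -ψ y (-θ)) ρ (-S) (-a) (-T) y := by
  obtain ⟨h1, h2, h3⟩ := h
  refine ⟨h1, ?_, ?_⟩
  · rwa [qd_neg, abs_neg]
  · simp only [qd_neg, neg_neg, h3]; ring

open Filter Topology in
theorem evF (h : HH F ψ M ρ) {s θ : ℝ → ℝ} (hs : ContinuousAt s 0) (hθ : ContinuousAt θ 0)
    {y : ℝ} (hy : |y| < ρ / 2) (hb : |θ 0| < ρ / 2) (hlt : ψ y (θ 0) < s 0) :
    ∀ᶠ ε in 𝓝 (0 : ℝ), F (s ε) y (θ ε) := by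
  have hρ := h.hρ
  have c : ContinuousAt (fun ε => ψ y (θ ε)) 0 := by
    have hc := h.cont hy hb
    have h2 : ContinuousAt (fun ε => (y, θ ε)) 0 := by fun_prop
    exact ContinuousAt.comp (g := fun w : ℝ × ℝ => ψ w.1 w.2) (f := fun ε => (y, θ ε)) hc h2
  have e1 := c.eventually_lt hs hlt
  have e2 : ∀ᶠ ε in 𝓝 (0 : ℝ), |θ ε| < ρ / 2 := hθ.abs.eventually_lt continuousAt_const hb
  filter_upwards [e1, e2] with ε h1 h2
  exact h.hu _ _ _ (by linarith) (by linarith) h1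

open Filter Topology in
theorem evNF (h : HH F ψ M ρ) {s θ : ℝ → ℝ} (hs : ContinuousAt s 0) (hθ : ContinuousAt θ 0)
    {y : ℝ} (hy : |y| < ρ / 2) (hb : |θ 0| < ρ / 2) (hlt : s 0 < ψ y (θ 0)) :
    ∀ᶠ ε in 𝓝 (0 : ℝ), ¬ F (s ε) y (θ ε) := by
  have := h.dual.evF (s := fun ε => - s ε) (θ := fun ε => - θ ε) hs.neg hθ.neg hy
    (by rwa [abs_neg]) (by simpa using hlt)
  simpa using this

open Filter Topology in
theorem zout (h : HH F ψ M ρ) {S a T y1 y2 y3 : ℝ} (hb : 0 < (y2 - y1) * (y3 - y2))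
    (b1 : |y1| < ρ / 2) (b1' : |qd S a T y1| < ρ / 2)
    (o2 : On ψ ρ S a T y2) (o3 : On ψ ρ S a T y3)
    (hlt : ψ y1 (qd S a T y1) < S + a * y1) : False := by
  have hρ := h.hρ
  obtain ⟨b2, b2', z2⟩ := o2
  obtain ⟨b3, b3', z3⟩ := o3
  have hne : y3 - y2 ≠ 0 := fun h0 => by rw [h0] at hb; simp at hb
  have ev := h.evF (s := fun ε => S + a * y1 - ε + 2 * ε / (y3 - y2) * (y1 - y2))
    (θ := fun ε => qd S a T y2 + (y1 - y2) * ((S + a * y2 - ε) +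
      (S + a * y1 - ε + 2 * ε / (y3 - y2) * (y1 - y2)))) (by fun_prop) (by fun_prop) (y := y1) b1
    (by
      have : qd S a T y2 + (y1 - y2) * ((S + a * y2 - 0) +
        (S + a * y1 - 0 + 2 * 0 / (y3 - y2) * (y1 - y2))) = qd S a T y1 := by
        unfold qd; ring
      rwa [this])
    (by
      have : qd S a T y2 + (y1 - y2) * ((S + a * y2 - 0) +
        (S + a * y1 - 0 + 2 * 0 / (y3 - y2) * (y1 - y2))) = qd S a T y1 := by
        unfold qd; ring
      rw [this]; simpa using hlt)
  obtain ⟨ε, hε, hε0⟩ := ((ev.filter_mono nhdsWithin_le_nhds).and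
    (self_mem_nhdsWithin : Set.Ioi (0:ℝ) ∈ 𝓝[>] 0)).exists
  have hε0 : 0 < ε := hε0
  have F3 : F (S + a * y3 + ε) y3 (qd S a T y3) :=
    h.hu _ _ _ (by linarith) (by linarith) (by linarith)
  have F2 : ¬ F (S + a * y2 - ε) y2 (qd S a T y2) :=
    h.hl _ _ _ (by linarith) (by linarith) (by linarith)
  apply F2
  refine h.tri1 hb ?_ ?_ ?_ hε F3
  · ring
  · unfold qd; ring
  · field_simp; ring

theorem zout' (h : HH F ψ M ρ) {S a T y1 y2 y3 : ℝ} (hb : 0 < (y2 - y1) * (y3 - y2))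
    (b1 : |y1| < ρ / 2) (b1' : |qd S a T y1| < ρ / 2)
    (o2 : On ψ ρ S a T y2) (o3 : On ψ ρ S a T y3) : On ψ ρ S a T y1 := by
  refine ⟨b1, b1', ?_⟩
  rcases lt_trichotomy (ψ y1 (qd S a T y1)) (S + a * y1) with hlt | heq | hgt
  · exact (h.zout hb b1 b1' o2 o3 hlt).elim
  · exact heq
  · exfalso
    refine h.dual.zout hb b1 ?_ o2.dual o3.dual ?_
    · rwa [qd_neg, abs_neg]
    · simp only [qd_neg, neg_neg]; linarith

open Filter Topology in
theorem zfull (h : HH F ψ M ρ) {S a T y1 y2 y3 : ℝ} (hne : y2 ≠ y3)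
    (b1 : |y1| < ρ / 2) (b1' : |qd S a T y1| < ρ / 2)
    (o2 : On ψ ρ S a T y2) (o3 : On ψ ρ S a T y3) : On ψ ρ S a T y1 := by
  have sq : 0 < (y3 - y2) ^ 2 := by
    have : y3 - y2 ≠ 0 := sub_ne_zero.2 hne.symm
    positivity
  by_cases e2 : y1 = y2
  · rwa [e2]
  by_cases e3 : y1 = y3
  · rwa [e3]
  rcases lt_or_ge 0 ((y2 - y1) * (y3 - y2)) with hp | hp
  · exact h.zout' hp b1 b1' o2 o3
  rcases lt_or_ge 0 ((y3 - y1) * (y2 - y3)) with hp' | hp'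
  · exact h.zout' hp' b1 b1' o3 o2
  -- y1 strictly between
  have c1 : ContinuousAt (fun e : ℝ => |y3 + e * (y3 - y2)|) 0 := by fun_prop
  have c2 : ContinuousAt (fun e : ℝ => |qd S a T (y3 + e * (y3 - y2))|) 0 := by
    unfold qd; fun_prop
  have v1 := c1.eventually_lt (continuousAt_const (y := ρ / 2)) (by simpa using o3.1)
  have v2 := c2.eventually_lt (continuousAt_const (y := ρ / 2)) (by simpa using o3.2.1)
  obtain ⟨e, ⟨hv1, hv2⟩, he⟩ := (((v1.and v2).filter_mono nhdsWithin_le_nhds).and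
    (self_mem_nhdsWithin : Set.Ioi (0:ℝ) ∈ 𝓝[>] 0)).exists
  have he : 0 < e := he
  have o4 : On ψ ρ S a T (y3 + e * (y3 - y2)) := by
    refine h.zout' ?_ hv1 hv2 o3 o2
    have : (y3 - (y3 + e * (y3 - y2))) * (y2 - y3) = e * (y3 - y2) ^ 2 := by ring
    rw [this]; positivity
  refine h.zout' ?_ b1 b1' o3 o4
  have : (y3 - y1) * (y3 + e * (y3 - y2) - y3) = e * (-((y3 - y1) * (y2 - y3))) := by ring
  rw [this]
  apply mul_pos he
  have : (y3 - y1) * (y2 - y3) ≠ 0 := mul_ne_zero (sub_ne_zero.2 (Ne.symm e3)) (sub_ne_zero.2 hne)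
  have := lt_of_le_of_ne hp' this
  linarith

theorem exists_line (h : HH F ψ M ρ) {y0 t0 : ℝ} (hy0 : |y0| < ρ / (128 * M))
    (ht0 : |t0| < ρ / 4) : ∃ S a T : ℝ, qd S a T y0 = t0 ∧
      ∀ y, |y| < ρ / (128 * M) → On ψ ρ S a T y := by
  have hM := h.hM
  have hρ := h.hρ
  obtain ⟨r, hr⟩ : ∃ r, r = ρ / (128 * M) := ⟨_, rfl⟩
  rw [← hr] at hy0 ⊢
  have hr0 : 0 < r := by rw [hr]; positivity
  have hρr : ρ = 128 * M * r := by rw [hr]; field_simp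
  have hMr : r ≤ M * r := by nlinarith
  have by0 : |y0| < ρ / 2 := by linarith
  have bt0 : |t0| < ρ / 2 := by linarith
  have by1 : |y0 + 8 * r| < ρ / 2 := by
    rw [abs_lt] at *; constructor <;> linarith
  have hb0 := abs_le.1 (h.hb y0 t0 (by linarith) (by linarith))
  have hbox : ∀ t ∈ Set.Icc (t0 - 16 * M * r) (t0 + 16 * M * r), |t| < ρ / 2 := by
    intro t ht
    have := ht.1
    have := ht.2
    rw [abs_lt] at *; constructor <;> linarith
  have hc : ContinuousOn (fun t => t - t0 - 8 * r * (ψ y0 t0 + ψ (y0 + 8 * r) t))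
      (Set.Icc (t0 - 16 * M * r) (t0 + 16 * M * r)) := by
    intro t ht
    apply ContinuousAt.continuousWithinAt
    have c : ContinuousAt (fun t => ψ (y0 + 8 * r) t) t := by
      have hc := h.cont by1 (hbox t ht)
      have h2 : ContinuousAt (fun t => (y0 + 8 * r, t)) t := by fun_prop
      exact ContinuousAt.comp (g := fun w : ℝ × ℝ => ψ w.1 w.2) (f := fun t => (y0 + 8 * r, t)) hc h2
    fun_prop
  have hab : t0 - 16 * M * r ≤ t0 + 16 * M * r := by nlinarith
  have bl := abs_le.1 (h.hb (y0 + 8 * r) (t0 - 16 * M * r) (by linarith) (by linarith [hbox _ (Set.left_mem_Icc.2 hab)]))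
  have br := abs_le.1 (h.hb (y0 + 8 * r) (t0 + 16 * M * r) (by linarith) (by linarith [hbox _ (Set.right_mem_Icc.2 hab)]))
  obtain ⟨t1, ht1, hz⟩ := intermediate_value_Icc hab hc (show (0:ℝ) ∈ _ from ⟨by nlinarith, by nlinarith⟩)
  simp only at hz
  have bt1 := hbox t1 ht1
  have hb1 := abs_le.1 (h.hb (y0 + 8 * r) t1 (by linarith) (by linarith))
  obtain ⟨s0, hs0⟩ : ∃ s, s = ψ y0 t0 := ⟨_, rfl⟩
  obtain ⟨s1, hs1⟩ : ∃ s, s = ψ (y0 + 8 * r) t1 := ⟨_, rfl⟩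
  rw [← hs0] at hz hb0
  rw [← hs1] at hz hb1
  obtain ⟨a, ha⟩ : ∃ a, a * (8 * r) = s1 - s0 := ⟨(s1 - s0) / (8 * r), by field_simp⟩
  refine ⟨s0 - a * y0, a, t0 - 2 * (s0 - a * y0) * y0 - a * y0 ^ 2, by unfold qd; ring, ?_⟩
  have E : ∀ y, qd (s0 - a * y0) a (t0 - 2 * (s0 - a * y0) * y0 - a * y0 ^ 2) y =
      t0 + (y - y0) * (2 * s0 + a * (y - y0)) := by
    intro y; unfold qd; ring
  have o0 : On ψ ρ (s0 - a * y0) a (t0 - 2 * (s0 - a * y0) * y0 - a * y0 ^ 2) y0 := by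
    refine ⟨by0, ?_, ?_⟩ <;> rw [E]
    · simpa using bt0
    · simp [← hs0]
  have o1 : On ψ ρ (s0 - a * y0) a (t0 - 2 * (s0 - a * y0) * y0 - a * y0 ^ 2) (y0 + 8 * r) := by
    have : t0 + (y0 + 8 * r - y0) * (2 * s0 + a * (y0 + 8 * r - y0)) = t1 := by
      have : a * (y0 + 8 * r - y0) = s1 - s0 := by rw [← ha]; ring
      rw [this]; linarith
    refine ⟨by1, ?_, ?_⟩ <;> rw [E, this]
    · exact bt1
    · rw [← hs1]; linarith
  intro y hy
  refine h.zfull (by linarith) (by linarith) ?_ o0 o1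
  rw [E]
  have hyy : |y - y0| ≤ 2 * r := by
    rw [abs_lt] at *; rw [abs_le]; constructor <;> linarith
  have haa : |a * (y - y0)| ≤ M := by
    rw [abs_mul]
    have h8 : |a| * (8 * r) ≤ 2 * M := by
      rw [← abs_of_pos (show 0 < 8 * r by linarith), ← abs_mul, ha, abs_le]
      constructor <;> linarith
    have := abs_nonneg a
    nlinarith
  have h3 : |2 * s0 + a * (y - y0)| ≤ 3 * M := by
    rw [abs_le] at *; constructor <;> linarith
  have h4 : |(y - y0) * (2 * s0 + a * (y - y0))| ≤ 2 * r * (3 * M) := by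
    rw [abs_mul]; gcongr
  have := abs_add_le t0 ((y - y0) * (2 * s0 + a * (y - y0)))
  nlinarith


end HH

namespace HH
variable {F : ℝ → ℝ → ℝ → Prop} {ψ : ℝ → ℝ → ℝ} {M ρ : ℝ}

theorem noncross {d0 d1 d2 r : ℝ} (h0 : 0 < d0)
    (H : ∀ e, |e| < r → d0 + 2 * d1 * e + d2 * e ^ 2 = 0 → d1 + d2 * e = 0) {e : ℝ} (he : |e| < r) :
    0 ≤ d0 + 2 * d1 * e + d2 * e ^ 2 := by
  by_contra hn
  push Not at hn
  have hc : ContinuousOn (fun l : ℝ => d0 + 2 * d1 * (l * e) + d2 * (l * e) ^ 2) (Set.Icc 0 1) := by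
    fun_prop
  obtain ⟨l, hl, hz⟩ := intermediate_value_Icc' (zero_le_one) hc
    (show (0:ℝ) ∈ _ from ⟨by simpa using hn.le, by simpa using h0.le⟩)
  simp only at hz
  have hle : |l * e| < r := by
    rw [abs_mul, abs_of_nonneg hl.1]
    have := abs_nonneg e
    nlinarith [hl.2]
  have h1 := H _ hle hz
  obtain ⟨x, hx⟩ : ∃ x, x = l * e := ⟨_, rfl⟩
  rw [← hx] at hz h1
  have e1 : d1 = - d2 * x := by linarith
  have e0 : d0 = d2 * x ^ 2 := by rw [e1] at hz; linarith
  have : d0 + 2 * d1 * e + d2 * e ^ 2 = d2 * (e - x) ^ 2 := by rw [e0, e1]; ring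
  rw [this] at hn
  have hd : 0 < d2 := by
    by_contra hneg
    push Not at hneg
    nlinarith [sq_nonneg x]
  nlinarith [sq_nonneg (e - x)]

theorem On.val_eq {S a T S' a' T' y : ℝ} (h1 : On ψ ρ S a T y) (h2 : On ψ ρ S' a' T' y)
    (h : qd S a T y = qd S' a' T' y) : S + a * y = S' + a' * y := by
  rw [← h1.2.2, ← h2.2.2, h]

open Filter Topology in
set_option maxHeartbeats 1000000 in
theorem unique (h : HH F ψ M ρ) {y0 r S a T S' a' T' : ℝ} (hr : 0 < r)
    (hrr : |y0| + r ≤ ρ / (128 * M)) (h1 : ∀ y, |y - y0| < r → On ψ ρ S a T y)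
    (h2 : ∀ y, |y - y0| < r → On ψ ρ S' a' T' y) (heq : qd S a T y0 = qd S' a' T' y0)
    (hθ : |qd S a T y0| < ρ / 4) (hlt : a < a') : False := by
  have hM := h.hM
  have hρ := h.hρ
  obtain ⟨d, hd⟩ : ∃ d, d = a' - a := ⟨_, rfl⟩
  have hd0 : 0 < d := by linarith
  have o1 := h1 y0 (by simpa using hr)
  have o2 := h2 y0 (by simpa using hr)
  have hv := o1.val_eq o2 heq
  obtain ⟨t0, ht0⟩ : ∃ t, t = qd S a T y0 := ⟨_, rfl⟩
  obtain ⟨s0, hs0⟩ : ∃ s, s = S + a * y0 := ⟨_, rfl⟩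
  have z1 : ψ y0 t0 = s0 := by rw [ht0, hs0]; exact o1.2.2
  have E1 : ∀ e, qd S a T (y0 + e) = t0 + 2 * s0 * e + a * e ^ 2 := by
    intro e; rw [ht0, hs0]; unfold qd; ring
  have E2 : ∀ e, qd S' a' T' (y0 + e) = t0 + 2 * s0 * e + a' * e ^ 2 := by
    intro e; rw [ht0, hs0, heq, hv]; unfold qd; ring
  rw [← ht0] at hθ
  have hy0 : |y0| < ρ / (128 * M) := by linarith
  have hbig : ρ / (128 * M) ≤ ρ / 2 := by
    apply div_le_div_of_nonneg_left hρ.le (by norm_num) (by linarith)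
  -- choose δ
  have c : ContinuousAt (fun δ => ψ y0 (t0 + δ)) 0 := by
    have hc := h.cont (y := y0) (t := t0 + 0) (by linarith) (by rw [add_zero]; linarith)
    have h2 : ContinuousAt (fun δ : ℝ => (y0, t0 + δ)) 0 := by fun_prop
    exact ContinuousAt.comp (g := fun w : ℝ × ℝ => ψ w.1 w.2) (f := fun δ : ℝ => (y0, t0 + δ)) hc h2
  have c1 : ContinuousAt (fun δ => δ + 2 * |ψ y0 (t0 + δ) - s0| * (r / 2)) 0 :=
    continuousAt_id.add ((continuousAt_const.mul (c.sub continuousAt_const).abs).mul continuousAt_const)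
  have v1 := c1.eventually_lt (continuousAt_const (y := (r / 2) ^ 2 * d / 2))
    (by simp [z1]; positivity)
  have c2 : ContinuousAt (fun δ => |t0 + δ|) 0 := by fun_prop
  have v2 := c2.eventually_lt (continuousAt_const (y := ρ / 4)) (by simpa using hθ)
  obtain ⟨δ, ⟨hv1, hv2⟩, hδ⟩ := (((v1.and v2).filter_mono nhdsWithin_le_nhds).and
    (self_mem_nhdsWithin : Set.Ioi (0:ℝ) ∈ 𝓝[>] 0)).exists
  have hδ : 0 < δ := hδ
  obtain ⟨Sn, an, Tn, hn, On3⟩ := h.exists_line hy0 hv2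
  have h3 : ∀ e, |e| < r → On ψ ρ Sn an Tn (y0 + e) := by
    intro e he
    apply On3
    have := abs_add_le y0 e
    linarith
  obtain ⟨s, hs⟩ : ∃ s, s = Sn + an * y0 - s0 := ⟨_, rfl⟩
  have hsψ : ψ y0 (t0 + δ) - s0 = s := by
    have := (On3 y0 hy0).2.2
    rw [hn] at this
    rw [this, hs]
  rw [hsψ] at hv1
  obtain ⟨A, hA⟩ : ∃ A, A = an - a := ⟨_, rfl⟩
  have hSn : Sn = s0 + s - an * y0 := by linarith
  have E3 : ∀ e, qd Sn an Tn (y0 + e) = t0 + δ + 2 * (s0 + s) * e + an * e ^ 2 := by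
    intro e; rw [← hn, hSn]; unfold qd; ring
  have h1' : ∀ e, |e| < r → On ψ ρ S a T (y0 + e) := fun e he => h1 _ (by simpa using he)
  have h2' : ∀ e, |e| < r → On ψ ρ S' a' T' (y0 + e) := fun e he => h2 _ (by simpa using he)
  have NC : ∀ e, |e| < r → 0 ≤ δ + 2 * s * e + (A - d) * e ^ 2 := by
    intro e he
    refine noncross hδ ?_ he
    intro e he hz
    have := (h3 e he).val_eq (h2' e he) (by rw [E3, E2]; rw [hA, hd] at hz; linarith)
    rw [hA, hd]
    linarith
  -- choose η
  obtain ⟨η, hη, hsη⟩ : ∃ η : ℝ, |η| = r / 2 ∧ 0 ≤ s * η := by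
    rcases le_total 0 s with h | h
    · exact ⟨r / 2, abs_of_pos (by linarith), by positivity⟩
    · exact ⟨-(r / 2), by rw [abs_neg]; exact abs_of_pos (by linarith), by nlinarith⟩
  have hη2 : η ^ 2 = (r / 2) ^ 2 := by rw [← sq_abs, hη]
  have hη2p : 0 < η ^ 2 := by rw [hη2]; positivity
  have hsη' : s * η = |s| * (r / 2) := by
    rw [← hη, ← abs_mul, abs_of_nonneg hsη]
  have hAd : d / 2 < A := by
    have := NC η (by linarith)
    rw [← hη2] at hv1
    have h5 : η ^ 2 * (d / 2) < η ^ 2 * A := by nlinarith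
    exact lt_of_mul_lt_mul_left h5 hη2p.le
  have hA0 : 0 < A := by linarith
  have hη0 : η ≠ 0 := fun h0 => by rw [h0] at hη2p; simp at hη2p
  -- k = s + η A
  obtain ⟨k, hk⟩ : ∃ k, k = s + η * A := ⟨_, rfl⟩
  have hkη : 0 < k * η := by
    have : k * η = s * η + A * η ^ 2 := by rw [hk]; ring
    rw [this]; positivity
  have hk0 : k ≠ 0 := fun h0 => by rw [h0] at hkη; simp at hkη
  obtain ⟨e1, he1⟩ : ∃ e1, e1 * k = -(δ + η * s) := ⟨-(δ + η * s) / k, by field_simp⟩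
  have he10 : e1 ≠ 0 := by
    intro h0; rw [h0] at he1; nlinarith
  have he1η : e1 * η < 0 := by
    have : (e1 * η) * (k * η) = -(δ + η * s) * η ^ 2 := by rw [← he1]; ring
    by_contra hcon
    push Not at hcon
    have h6 : 0 ≤ (e1 * η) * (k * η) := mul_nonneg hcon hkη.le
    rw [this] at h6
    nlinarith
  have he1r : |e1| < r / 2 := by
    have h7 : |e1| * |k| = δ + η * s := by
      rw [← abs_mul, he1, abs_neg]; exact abs_of_pos (by nlinarith)
    have h8 : (r / 2) * |k| = s * η + A * η ^ 2 := by
      rw [← hη, ← abs_mul, mul_comm η k, abs_of_pos hkη, hk]; ring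
    have h9 : |e1| * |k| < (r / 2) * |k| := by
      rw [h7, h8]
      rw [← hη2] at hv1
      have : η ^ 2 * (d / 2) < η ^ 2 * A := by nlinarith
      nlinarith [abs_nonneg s]
    exact lt_of_mul_lt_mul_right h9 (abs_nonneg k)
  have hw0 : 0 < (η - e1) * η := by nlinarith
  have hw : η - e1 ≠ 0 := fun h0 => by rw [h0] at hw0; simp at hw0
  obtain ⟨c, hc⟩ : ∃ c, c * (η - e1) = k := ⟨k / (η - e1), by field_simp⟩
  have hc0 : 0 < c := by
    by_contra hcon
    push Not at hcon
    have : k * η = c * ((η - e1) * η) := by rw [← hc]; ring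
    nlinarith
  -- the line p
  have P1 : ∀ e, qd (s0 - c * e1 - (a + c) * y0) (a + c)
      (t0 + c * e1 ^ 2 - 2 * (s0 - c * e1 - (a + c) * y0) * y0 - (a + c) * y0 ^ 2) (y0 + e) =
      t0 + 2 * s0 * e + a * e ^ 2 + c * (e - e1) ^ 2 := by
    intro e; unfold qd; ring
  have P2 : ∀ e, (s0 - c * e1 - (a + c) * y0) + (a + c) * (y0 + e) = s0 + a * e + c * (e - e1) := by
    intro e; ring
  have Pη : t0 + 2 * s0 * η + a * η ^ 2 + c * (η - e1) ^ 2 =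
      t0 + δ + 2 * (s0 + s) * η + an * η ^ 2 := by
    have h10 : c * (η - e1) ^ 2 = δ + 2 * s * η + A * η ^ 2 := by
      calc c * (η - e1) ^ 2 = k * (η - e1) := by rw [← hc]; ring
        _ = k * η - e1 * k := by ring
        _ = _ := by rw [he1, hk]; ring
    rw [h10, hA]; ring
  have op1 : On ψ ρ (s0 - c * e1 - (a + c) * y0) (a + c)
      (t0 + c * e1 ^ 2 - 2 * (s0 - c * e1 - (a + c) * y0) * y0 - (a + c) * y0 ^ 2) (y0 + e1) := by
    obtain ⟨q1, q2, q3⟩ := h1' e1 (by linarith)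
    have : qd (s0 - c * e1 - (a + c) * y0) (a + c)
      (t0 + c * e1 ^ 2 - 2 * (s0 - c * e1 - (a + c) * y0) * y0 - (a + c) * y0 ^ 2) (y0 + e1) =
      qd S a T (y0 + e1) := by rw [P1, E1]; ring
    refine ⟨q1, by rwa [this], ?_⟩
    rw [this, q3, P2, hs0]; ring
  have op2 : On ψ ρ (s0 - c * e1 - (a + c) * y0) (a + c)
      (t0 + c * e1 ^ 2 - 2 * (s0 - c * e1 - (a + c) * y0) * y0 - (a + c) * y0 ^ 2) (y0 + η) := by
    obtain ⟨q1, q2, q3⟩ := h3 η (by linarith)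
    have : qd (s0 - c * e1 - (a + c) * y0) (a + c)
      (t0 + c * e1 ^ 2 - 2 * (s0 - c * e1 - (a + c) * y0) * y0 - (a + c) * y0 ^ 2) (y0 + η) =
      qd Sn an Tn (y0 + η) := by rw [P1, E3]; exact Pη
    refine ⟨q1, by rwa [this], ?_⟩
    rw [this, q3, P2, hc, hSn, hk, hA]; ring
  -- crossing point
  obtain ⟨α, hα0, hα⟩ : ∃ α : ℝ, 0 < α ∧ α ^ 2 = c := ⟨√c, Real.sqrt_pos.2 hc0, Real.sq_sqrt hc0.le⟩
  obtain ⟨γ, hγ0, hγ⟩ : ∃ α : ℝ, 0 < α ∧ α ^ 2 = d := ⟨√d, Real.sqrt_pos.2 hd0, Real.sq_sqrt hd0.le⟩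
  obtain ⟨x, hx⟩ : ∃ x, x * (α + γ) = e1 * α := ⟨e1 * α / (α + γ), by field_simp⟩
  have hxe : α * (x - e1) = - (γ * x) := by linarith
  have hxr : |x| < r := by
    have h11 : |x| * (α + γ) = |e1| * α := by
      rw [← abs_of_pos (show 0 < α + γ by linarith), ← abs_mul, hx, abs_mul, abs_of_pos hα0]
    have := abs_nonneg x
    have := abs_nonneg e1
    nlinarith
  have hx0 : x ≠ 0 := by
    intro h0; rw [h0] at hx
    have := mul_ne_zero he10 hα0.ne'
    apply this; linarith
  obtain ⟨m1, m2, m3⟩ := h2' x hxr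
  have Peq : qd (s0 - c * e1 - (a + c) * y0) (a + c)
      (t0 + c * e1 ^ 2 - 2 * (s0 - c * e1 - (a + c) * y0) * y0 - (a + c) * y0 ^ 2) (y0 + x) =
      qd S' a' T' (y0 + x) := by
    rw [P1, E2]
    have : c * (x - e1) ^ 2 = d * x ^ 2 := by
      rw [← hα, ← hγ]
      calc _ = (α * (x - e1)) ^ 2 := by ring
        _ = _ := by rw [hxe]; ring
    rw [this, hd]; ring
  have op3 := h.zfull (y1 := y0 + x) (fun h0 => hw (by linarith)) m1 (by rw [Peq]; exact m2) op1 op2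
  have fin := op3.val_eq (h2' x hxr) Peq
  rw [P2] at fin
  have f2 : S' = s0 - a' * y0 := by rw [hs0]; linarith
  have f3 : c * (x - e1) = d * x := by rw [f2] at fin; rw [hd]; linarith
  have f4 : α * (α * (x - e1)) = γ ^ 2 * x := by rw [← mul_assoc, ← sq, hα, hγ]; exact f3
  rw [hxe] at f4
  have f5 : γ * (α + γ) * x = 0 := by linarith
  have : γ * (α + γ) ≠ 0 := by positivity
  exact (mul_ne_zero this hx0) f5


end HH

namespace HH
variable {F : ℝ → ℝ → ℝ → Prop} {ψ : ℝ → ℝ → ℝ} {M ρ : ℝ}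

theorem tri2 (h : HH F ψ M ρ) {s1 y1 t1 s2 y2 t2 s3 y3 t3 : ℝ}
    (hb : 0 < (y2 - y1) * (y3 - y2)) (e1 : t2 - t1 = (y2 - y1) * (s1 + s2))
    (e2 : t3 - t2 = (y3 - y2) * (s2 + s3))
    (e3 : (s3 - s2) * (y2 - y1) = (s2 - s1) * (y3 - y2))
    (h1 : ¬ F s1 y1 t1) (h3 : ¬ F s3 y3 t3) : ¬ F s2 y2 t2 := by
  have := h.dual.tri1 (s1 := -s1) (t1 := -t1) (s2 := -s2) (t2 := -t2) (s3 := -s3) (t3 := -t3) hb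
    (by linarith) (by linarith) (by linarith) (by simpa using h1) (by simpa using h3)
  simpa using this

open Filter Topology in
theorem far0 (h : HH F ψ M ρ) {S1 a1 T1 ya yb y' am yf yn : ℝ}
    (hb1 : 0 < (yb - ya) * (y' - yb)) (oa : On ψ ρ S1 a1 T1 ya) (ob : On ψ ρ S1 a1 T1 yb)
    (hb2 : 0 < (yn - yf) * (y' - yn)) (bn : |yn| < ρ / 2) (bf : |yf| < ρ / 2)
    (bn' : |qd S1 a1 T1 y' + (yn - y') * (2 * (S1 + a1 * y') + am * (yn - y'))| < ρ / 2)
    (bf' : |qd S1 a1 T1 y' + (yf - y') * (2 * (S1 + a1 * y') + am * (yf - y'))| < ρ / 2)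
    (hn : ψ yn (qd S1 a1 T1 y' + (yn - y') * (2 * (S1 + a1 * y') + am * (yn - y'))) <
      S1 + a1 * y' + am * (yn - y'))
    (hf : S1 + a1 * y' + am * (yf - y') <
      ψ yf (qd S1 a1 T1 y' + (yf - y') * (2 * (S1 + a1 * y') + am * (yf - y')))) : False := by
  have hρ := h.hρ
  have hne : yb - ya ≠ 0 := fun h0 => by rw [h0] at hb1; simp at hb1
  obtain ⟨sg, hsg⟩ : ∃ sg : ℝ → ℝ, sg = fun ε => S1 + a1 * yb - ε + (a1 - 2 * ε / (yb - ya)) * (y' - yb) :=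
    ⟨_, rfl⟩
  obtain ⟨tg, htg⟩ : ∃ tg : ℝ → ℝ, tg = fun ε => qd S1 a1 T1 yb + (y' - yb) * (S1 + a1 * yb - ε + sg ε) :=
    ⟨_, rfl⟩
  have cs : Continuous sg := by rw [hsg]; fun_prop
  have ct : Continuous tg := by rw [htg]; fun_prop
  have s0 : sg 0 = S1 + a1 * y' := by rw [hsg]; simp; ring
  have t0 : tg 0 = qd S1 a1 T1 y' := by rw [htg]; simp only [s0]; unfold qd; ring
  have evn := h.evF (s := fun ε => sg ε + am * (yn - y'))
    (θ := fun ε => tg ε + (yn - y') * (2 * sg ε + am * (yn - y')))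
    (by fun_prop) (by fun_prop) bn (by rw [s0, t0]; exact bn') (by rw [s0, t0]; exact hn)
  have evf := h.evNF (s := fun ε => sg ε + am * (yf - y'))
    (θ := fun ε => tg ε + (yf - y') * (2 * sg ε + am * (yf - y')))
    (by fun_prop) (by fun_prop) bf (by rw [s0, t0]; exact bf') (by rw [s0, t0]; exact hf)
  obtain ⟨ε, ⟨hv1, hv2⟩, hε⟩ := (((evn.and evf).filter_mono nhdsWithin_le_nhds).and
    (self_mem_nhdsWithin : Set.Ioi (0:ℝ) ∈ 𝓝[>] 0)).exists
  have hε : 0 < ε := hε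
  have Fa : F (S1 + a1 * ya + ε) ya (qd S1 a1 T1 ya) :=
    h.hu _ _ _ (by linarith [oa.1]) (by linarith [oa.2.1]) (by linarith [oa.2.2])
  have Fb : ¬ F (S1 + a1 * yb - ε) yb (qd S1 a1 T1 yb) :=
    h.hl _ _ _ (by linarith [ob.1]) (by linarith [ob.2.1]) (by linarith [ob.2.2])
  have F' : ¬ F (sg ε) y' (tg ε) := by
    intro hF
    apply Fb
    refine h.tri1 hb1 ?_ ?_ ?_ Fa hF
    · unfold qd; ring
    · rw [htg]; ring
    · rw [hsg]; field_simp; ring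
  refine h.tri2 hb2 ?_ ?_ ?_ hv2 F' hv1
  · ring
  · ring
  · ring

theorem far1 (h : HH F ψ M ρ) {S1 a1 T1 y' am yf yn : ℝ}
    (g1 : ∀ y, |y| < ρ / (128 * M) → On ψ ρ S1 a1 T1 y)
    (hb2 : 0 < (yn - yf) * (y' - yn)) (bn : |yn| < ρ / 2) (bf : |yf| < ρ / 2)
    (bn' : |qd S1 a1 T1 y' + (yn - y') * (2 * (S1 + a1 * y') + am * (yn - y'))| < ρ / 2)
    (bf' : |qd S1 a1 T1 y' + (yf - y') * (2 * (S1 + a1 * y') + am * (yf - y'))| < ρ / 2)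
    (hn : ψ yn (qd S1 a1 T1 y' + (yn - y') * (2 * (S1 + a1 * y') + am * (yn - y'))) <
      S1 + a1 * y' + am * (yn - y'))
    (hf : S1 + a1 * y' + am * (yf - y') <
      ψ yf (qd S1 a1 T1 y' + (yf - y') * (2 * (S1 + a1 * y') + am * (yf - y')))) : False := by
  have hM := h.hM
  have hρ := h.hρ
  have hr : 0 < ρ / (128 * M) := by positivity
  obtain ⟨r, hrr⟩ : ∃ r, r = ρ / (128 * M) := ⟨_, rfl⟩
  rw [← hrr] at g1 hr
  rcases le_total 0 y' with hy | hy
  · refine h.far0 (ya := -(r / 2)) (yb := -(r / 4)) ?_ (g1 _ ?_) (g1 _ ?_) hb2 bn bf bn' bf' hn hf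
    · apply mul_pos <;> linarith
    · rw [abs_lt]; constructor <;> linarith
    · rw [abs_lt]; constructor <;> linarith
  · refine h.far0 (ya := (r / 2)) (yb := (r / 4)) ?_ (g1 _ ?_) (g1 _ ?_) hb2 bn bf bn' bf' hn hf
    · apply mul_pos_of_neg_of_neg <;> linarith
    · rw [abs_lt]; constructor <;> linarith
    · rw [abs_lt]; constructor <;> linarith

theorem far1' (h : HH F ψ M ρ) {S1 a1 T1 y' am yf yn : ℝ}
    (g1 : ∀ y, |y| < ρ / (128 * M) → On ψ ρ S1 a1 T1 y)
    (hb2 : 0 < (yn - yf) * (y' - yn)) (bn : |yn| < ρ / 2) (bf : |yf| < ρ / 2)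
    (bn' : |qd S1 a1 T1 y' + (yn - y') * (2 * (S1 + a1 * y') + am * (yn - y'))| < ρ / 2)
    (bf' : |qd S1 a1 T1 y' + (yf - y') * (2 * (S1 + a1 * y') + am * (yf - y'))| < ρ / 2)
    (hn : S1 + a1 * y' + am * (yn - y') <
      ψ yn (qd S1 a1 T1 y' + (yn - y') * (2 * (S1 + a1 * y') + am * (yn - y'))))
    (hf : ψ yf (qd S1 a1 T1 y' + (yf - y') * (2 * (S1 + a1 * y') + am * (yf - y'))) <
      S1 + a1 * y' + am * (yf - y')) : False := by
  have E : ∀ y, qd (-S1) (-a1) (-T1) y' + (y - y') * (2 * (-S1 + -a1 * y') + -am * (y - y')) =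
    -(qd S1 a1 T1 y' + (y - y') * (2 * (S1 + a1 * y') + am * (y - y'))) := by
    intro y; rw [qd_neg]; ring
  refine h.dual.far1 (S1 := -S1) (a1 := -a1) (T1 := -T1) (am := -am) (fun y hy => (g1 y hy).dual)
    hb2 bn bf ?_ ?_ ?_ ?_
  · rw [E, abs_neg]; exact bn'
  · rw [E, abs_neg]; exact bf'
  · simp only [E, neg_neg]; linarith
  · simp only [E, neg_neg]; linarith

/-- no double sign at a zero -/
theorem updown (h : HH F ψ M ρ) {S a T y e : ℝ} (he : e ≠ 0) (o : On ψ ρ S a T y)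
    (b1 : |y + e| < ρ / 2) (b1' : |qd S a T (y + e)| < ρ / 2)
    (b2 : |y - e| < ρ / 2) (b2' : |qd S a T (y - e)| < ρ / 2)
    (h1 : ψ (y + e) (qd S a T (y + e)) < S + a * (y + e))
    (h2 : ψ (y - e) (qd S a T (y - e)) < S + a * (y - e)) : False := by
  have hρ := h.hρ
  have E : ∀ x ε : ℝ, qd (S - ε) a (T + 2 * ε * y) x = qd S a T x - 2 * ε * (x - y) := by
    intro x ε; unfold qd; ring
  have ev1 := h.evF (s := fun ε => S - ε + a * (y + e))
    (θ := fun ε => qd (S - ε) a (T + 2 * ε * y) (y + e)) (by fun_prop)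
    (by simp only [E]; fun_prop) b1 (by simpa using b1') (by simpa using h1)
  have ev2 := h.evF (s := fun ε => S - ε + a * (y - e))
    (θ := fun ε => qd (S - ε) a (T + 2 * ε * y) (y - e)) (by fun_prop)
    (by simp only [E]; fun_prop) b2 (by simpa using b2') (by simpa using h2)
  obtain ⟨ε, ⟨hv1, hv2⟩, hε⟩ := (((ev1.and ev2).filter_mono nhdsWithin_le_nhds).and
    (self_mem_nhdsWithin : Set.Ioi (0:ℝ) ∈ nhdsWithin 0 (Set.Ioi 0))).exists
  have hε : 0 < ε := hε
  have F2 : ¬ F (S - ε + a * y) y (qd (S - ε) a (T + 2 * ε * y) y) := by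
    rw [E, sub_self, mul_zero, sub_zero]
    exact h.hl _ _ _ (by linarith [o.1]) (by linarith [o.2.1]) (by linarith [o.2.2])
  apply F2
  refine h.c1 (S - ε) a (T + 2 * ε * y) (y + e) y (y - e) ?_ hv1 hv2
  have : (y - (y + e)) * (y - e - y) = e ^ 2 := by ring
  rw [this]; positivity

theorem updown' (h : HH F ψ M ρ) {S a T y e : ℝ} (he : e ≠ 0) (o : On ψ ρ S a T y)
    (b1 : |y + e| < ρ / 2) (b1' : |qd S a T (y + e)| < ρ / 2)
    (b2 : |y - e| < ρ / 2) (b2' : |qd S a T (y - e)| < ρ / 2)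
    (h1 : S + a * (y + e) < ψ (y + e) (qd S a T (y + e)))
    (h2 : S + a * (y - e) < ψ (y - e) (qd S a T (y - e))) : False := by
  refine h.dual.updown he o.dual b1 ?_ b2 ?_ ?_ ?_
  · rwa [qd_neg, abs_neg]
  · rwa [qd_neg, abs_neg]
  · simp only [qd_neg, neg_neg]; linarith
  · simp only [qd_neg, neg_neg]; linarith

open Filter Topology in
theorem far (h : HH F ψ M ρ) {S0 a0 T0 S1 a1 T1 y0 y' : ℝ}
    (g0 : ∀ y, |y| < ρ / (128 * M) → On ψ ρ S0 a0 T0 y)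
    (g1 : ∀ y, |y| < ρ / (128 * M) → On ψ ρ S1 a1 T1 y)
    (hy0 : |y0| < ρ / (128 * M)) (hθ : |qd S0 a0 T0 y0| < ρ / 4) (hne : y' ≠ y0)
    (link : qd S1 a1 T1 y' - qd S0 a0 T0 y0 = (y' - y0) * (S0 + a0 * y0 + (S1 + a1 * y'))) :
    S1 + a1 * y' = S0 + a0 * y' := by
  have hM := h.hM
  have hρ := h.hρ
  have hne' : y' - y0 ≠ 0 := sub_ne_zero.2 hne
  obtain ⟨s0, hs0⟩ : ∃ s, s = S0 + a0 * y0 := ⟨_, rfl⟩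
  obtain ⟨s1, hs1⟩ : ∃ s, s = S1 + a1 * y' := ⟨_, rfl⟩
  obtain ⟨am, ham⟩ : ∃ a, a * (y' - y0) = s1 - s0 := ⟨(s1 - s0) / (y' - y0), by field_simp⟩
  obtain ⟨Sm, hSm⟩ : ∃ S, S = s0 - am * y0 := ⟨_, rfl⟩
  obtain ⟨Tm, hTm⟩ : ∃ T, T = qd S0 a0 T0 y0 - 2 * Sm * y0 - am * y0 ^ 2 := ⟨_, rfl⟩
  have Q0 : qd Sm am Tm y0 = qd S0 a0 T0 y0 := by rw [hTm]; unfold qd; ring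
  have V : ∀ y, Sm + am * y = s1 + am * (y - y') := by
    intro y; rw [hSm]; linear_combination ham
  have Q : ∀ y, qd Sm am Tm y = qd S1 a1 T1 y' + (y - y') * (2 * (S1 + a1 * y') + am * (y - y')) := by
    intro y
    have e1 : qd S1 a1 T1 y' = qd S0 a0 T0 y0 + (y' - y0) * (s0 + s1) := by
      rw [hs0, hs1]; linarith
    have e2 : qd Sm am Tm y = qd S0 a0 T0 y0 + (y - y0) * (2 * s0 + am * (y - y0)) := by
      rw [hTm, hSm]; unfold qd; ring
    have e3 : s1 = s0 + am * (y' - y0) := by linarith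
    rw [e1, e2, ← hs1, e3]; ring
  have om : On ψ ρ Sm am Tm y0 := by
    obtain ⟨p1, p2, p3⟩ := g0 y0 hy0
    refine ⟨p1, by rwa [Q0], ?_⟩
    rw [Q0, p3, hSm, hs0]; ring
  obtain ⟨r, hr0, hr1, hrb⟩ : ∃ r > 0, |y0| + r ≤ ρ / (128 * M) ∧
      ∀ y, |y - y0| < r → |qd Sm am Tm y| < ρ / 2 := by
    have c : ContinuousAt (fun y => |qd Sm am Tm y|) y0 := by unfold qd; fun_prop
    have := c.eventually_lt (continuousAt_const (y := ρ / 2)) om.2.1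
    obtain ⟨r, hr, hb⟩ := Metric.eventually_nhds_iff.1 this
    refine ⟨min r (ρ / (128 * M) - |y0|), lt_min hr (by linarith), ?_, ?_⟩
    · linarith [min_le_right r (ρ / (128 * M) - |y0|)]
    · intro y hy
      apply hb
      rw [Real.dist_eq]
      exact lt_of_lt_of_le hy (min_le_left _ _)
  have hbig : ρ / (128 * M) ≤ ρ / 2 := by
    apply div_le_div_of_nonneg_left hρ.le (by norm_num) (by linarith)
  have hyb : ∀ y, |y - y0| < r → |y| < ρ / (128 * M) := by
    intro y hy
    have := abs_add_le y0 (y - y0)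
    rw [show y0 + (y - y0) = y by ring] at this
    linarith
  have hyb2 : ∀ y, |y - y0| < r → |y| < ρ / 2 := fun y hy => (hyb y hy).trans_le hbig
  -- if m has another zero we are done
  have case1 : ∀ y1, y1 ≠ y0 → |y1 - y0| < r → ψ y1 (qd Sm am Tm y1) = Sm + am * y1 →
      S1 + a1 * y' = S0 + a0 * y' := by
    intro y1 hy1 hy1r hz
    have o1 : On ψ ρ Sm am Tm y1 := ⟨hyb2 _ hy1r, hrb _ hy1r, hz⟩
    have oall : ∀ y, |y - y0| < r → On ψ ρ Sm am Tm y := fun y hy =>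
      h.zfull hy1 (hyb2 y hy) (hrb y hy) o1 om
    have hal : am = a0 := by
      rcases lt_trichotomy am a0 with hlt | heq | hgt
      · exact (h.unique hr0 hr1 oall (fun y hy => g0 y (hyb y hy)) Q0 (by rwa [Q0]) hlt).elim
      · exact heq
      · exact (h.unique hr0 hr1 (fun y hy => g0 y (hyb y hy)) oall Q0.symm hθ hgt).elim
    rw [← hs1]
    have : s1 = s0 + am * (y' - y0) := by linarith
    rw [this, hal, hs0]; ring
  -- small step
  obtain ⟨l, hl0, hl1, hlr⟩ : ∃ l : ℝ, 0 < l ∧ l < 1 ∧ |l * (y' - y0)| < r := by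
    refine ⟨min (1 / 2) (r / (2 * |y' - y0|)), lt_min (by norm_num) (by positivity),
      lt_of_le_of_lt (min_le_left _ _) (by norm_num), ?_⟩
    have hp : 0 < |y' - y0| := abs_pos.2 hne'
    have hm : 0 < min (1 / 2) (r / (2 * |y' - y0|)) := lt_min (by norm_num) (by positivity)
    rw [abs_mul, abs_of_pos hm]
    calc _ ≤ (r / (2 * |y' - y0|)) * |y' - y0| := by gcongr; exact min_le_right _ _
      _ = r / 2 := by field_simp
      _ < r := by linarith
  obtain ⟨e, he⟩ : ∃ e, e = l * (y' - y0) := ⟨_, rfl⟩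
  rw [← he] at hlr
  have he0 : e ≠ 0 := by rw [he]; exact mul_ne_zero hl0.ne' hne'
  have rp : |y0 + e - y0| < r := by rw [add_sub_cancel_left]; exact hlr
  have rm : |y0 - e - y0| < r := by
    rw [show y0 - e - y0 = -e by ring, abs_neg]; exact hlr
  have hbt : 0 < (y0 + e - (y0 - e)) * (y' - (y0 + e)) := by
    have : (y0 + e - (y0 - e)) * (y' - (y0 + e)) = 2 * l * (1 - l) * (y' - y0) ^ 2 := by
      rw [he]; ring
    rw [this]
    have : 0 < 1 - l := by linarith
    positivity
  have bp := hrb _ rp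
  have bm := hrb _ rm
  rcases lt_trichotomy (ψ (y0 + e) (qd Sm am Tm (y0 + e))) (Sm + am * (y0 + e)) with p | p | p
  · rcases lt_trichotomy (ψ (y0 - e) (qd Sm am Tm (y0 - e))) (Sm + am * (y0 - e)) with m | m | m
    · exact (h.updown he0 om (hyb2 _ rp) bp (hyb2 _ rm) bm p m).elim
    · exact case1 _ (fun h0 => he0 (by linarith)) rm m
    · exfalso
      rw [V, Q, hs1] at p m
      rw [Q] at bp bm
      exact h.far1 g1 hbt (hyb2 _ rp) (hyb2 _ rm) bp bm p m
  · exact case1 _ (fun h0 => he0 (by linarith)) rp p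
  · rcases lt_trichotomy (ψ (y0 - e) (qd Sm am Tm (y0 - e))) (Sm + am * (y0 - e)) with m | m | m
    · exfalso
      rw [V, Q, hs1] at p m
      rw [Q] at bp bm
      exact h.far1' g1 hbt (hyb2 _ rp) (hyb2 _ rm) bp bm p m
    · exact case1 _ (fun h0 => he0 (by linarith)) rm m
    · exact (h.updown' he0 om (hyb2 _ rp) bp (hyb2 _ rm) bm p m).elim

theorem null (h : HH F ψ M ρ) {S0 a0 T0 S1 a1 T1 : ℝ}
    (g0 : ∀ y, |y| < ρ / (128 * M) → On ψ ρ S0 a0 T0 y)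
    (g1 : ∀ y, |y| < ρ / (128 * M) → On ψ ρ S1 a1 T1 y)
    (hθ : ∀ y, |y| < ρ / (128 * M) → |qd S0 a0 T0 y| < ρ / 4) :
    (S1 - S0) ^ 2 = (T1 - T0) * (a1 - a0) := by
  have hM := h.hM
  have hρ := h.hρ
  have hr : 0 < ρ / (128 * M) := by positivity
  obtain ⟨r, hrr⟩ : ∃ r, r = ρ / (128 * M) := ⟨_, rfl⟩
  by_cases hdeg : S1 - S0 = 0 ∧ a1 - a0 = 0
  · rw [hdeg.1, hdeg.2]; ring
  obtain ⟨y, hy, hyn⟩ : ∃ y, |y| < ρ / (128 * M) ∧ (S1 - S0) + y * (a1 - a0) ≠ 0 := by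
    by_cases hS : S1 - S0 = 0
    · refine ⟨r / 2, ?_, ?_⟩
      · rw [abs_of_pos] <;> linarith
      · rw [hS, zero_add]
        exact mul_ne_zero (by linarith) (fun h0 => hdeg ⟨hS, h0⟩)
    · exact ⟨0, by simpa using hr, by simpa using hS⟩
  obtain ⟨x, hx⟩ : ∃ x, x * ((S1 - S0) + y * (a1 - a0)) = -((T1 - T0) + y * (S1 - S0)) :=
    ⟨-((T1 - T0) + y * (S1 - S0)) / ((S1 - S0) + y * (a1 - a0)), by field_simp⟩
  by_cases hxy : x = y
  · subst hxy
    have := (g1 x hy).val_eq (g0 x hy) (by unfold qd; linarith)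
    exfalso; apply hyn; linarith
  · have := h.far g0 g1 hy (hθ y hy) hxy (by unfold qd; linarith)
    have e1 : S1 - S0 = -x * (a1 - a0) := by linarith
    have e2 : T1 - T0 = x ^ 2 * (a1 - a0) := by
      rw [e1] at hx; linarith
    rw [e1, e2]; ring

theorem main (h : HH F ψ M ρ) : ∃ A B c r : ℝ, 0 < r ∧ ∀ y t, |y| < r → |t| < r →
    (1 - c * y) * ψ y t = A + B * y - c * t := by
  have hM := h.hM
  have hρ := h.hρ
  have hr : 0 < ρ / (128 * M) := by positivity
  have hbig : ρ / (128 * M) ≤ ρ / 128 := by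
    apply div_le_div_of_nonneg_left hρ.le (by norm_num) (by linarith)
  -- good lines with small T stay in small box
  have stay : ∀ S a T y0 : ℝ, (∀ y, |y| < ρ / (128 * M) → On ψ ρ S a T y) → |y0| < ρ / (128 * M) →
      |y0 * (2 * S + a * y0)| ≤ ρ / 64 := by
    intro S a T y0 g hy0
    have b0 : |S| ≤ M := by
      have := g 0 (by simpa using hr)
      have h2 := h.hb 0 (qd S a T 0) (by simpa using hρ) (by linarith [this.2.1])
      rw [this.2.2] at h2; simpa using h2
    have b1 : |S + a * y0| ≤ M := by
      have := g y0 hy0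
      have h2 := h.hb y0 (qd S a T y0) (by linarith [this.1]) (by linarith [this.2.1])
      rwa [this.2.2] at h2
    have b2 : |2 * S + a * y0| ≤ 2 * M := by
      rw [abs_le] at *; constructor <;> linarith
    rw [abs_mul]
    calc |y0| * |2 * S + a * y0| ≤ ρ / (128 * M) * (2 * M) := by gcongr
      _ = ρ / 64 := by field_simp; norm_num
  have stay' : ∀ S a T : ℝ, (∀ y, |y| < ρ / (128 * M) → On ψ ρ S a T y) → |T| ≤ ρ / 8 →
      ∀ y, |y| < ρ / (128 * M) → |qd S a T y| < ρ / 4 := by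
    intro S a T g hT y hy
    have h1 := stay S a T y g hy
    have h2 := abs_add_le T (y * (2 * S + a * y))
    rw [show qd S a T y = T + y * (2 * S + a * y) by unfold qd; ring]
    linarith
  obtain ⟨S0, a0, T0, hT0, g0⟩ := h.exists_line (y0 := 0) (t0 := 0) (by simpa using hr) (by simpa using hρ)
  obtain ⟨S1, a1, T1, hT1, g1⟩ := h.exists_line (y0 := 0) (t0 := ρ / 8) (by simpa using hr)
    (by rw [abs_of_pos] <;> linarith)
  have hT0 : T0 = 0 := by simpa [qd] using hT0
  have hT1 : T1 = ρ / 8 := by simpa [qd] using hT1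
  have s0 := stay' _ _ _ g0 (by rw [hT0]; simp; linarith)
  have s1 := stay' _ _ _ g1 (by rw [hT1, abs_of_pos]; linarith)
  have hT1p : 0 < T1 := by rw [hT1]; linarith
  obtain ⟨c, hc⟩ : ∃ c, c * T1 = -(S1 - S0) := ⟨-(S1 - S0) / T1, by field_simp⟩
  have n01 := h.null g0 g1 s0
  have hca : a1 - a0 = c ^ 2 * T1 := by
    apply mul_left_cancel₀ hT1p.ne'
    rw [hT0, sub_zero] at n01
    rw [← n01]
    have : S1 - S0 = -(c * T1) := by linarith
    rw [this]; ring
  refine ⟨S0, a0 + c * S0, c, ρ / (128 * M), hr, ?_⟩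
  intro y t hy ht
  obtain ⟨S, a, T, hT, g⟩ := h.exists_line (y0 := y) (t0 := t) hy (by linarith)
  have n0 := h.null g0 g s0
  have n1 := h.null g1 g s1
  rw [hT0, sub_zero] at n0
  have eS1 : S1 = S0 - c * T1 := by linarith
  have ea1 : a1 = a0 + c ^ 2 * T1 := by linarith
  have k1 : (a - a0) + 2 * c * (S - S0) + c ^ 2 * T = 0 := by
    apply mul_left_cancel₀ hT1p.ne'
    rw [eS1, ea1] at n1
    linear_combination n1 - n0
  have k2 : S - S0 = -c * T := by
    have : (S - S0 + c * T) ^ 2 = 0 := by linear_combination n0 + T * k1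
    have := pow_eq_zero_iff (two_ne_zero) |>.1 this
    linarith
  have k3 : a - a0 = c ^ 2 * T := by
    rw [k2] at k1; linarith
  have v := (g y hy).2.2
  rw [hT] at v
  rw [v, ← hT]
  have eS : S = S0 - c * T := by linarith
  have ea : a = a0 + c ^ 2 * T := by linarith
  rw [eS, ea]; unfold qd; ring


end HH

namespace HH

def Cv (G : ℝ → ℝ → ℝ → ℝ → Prop) : Prop :=
  ∀ s y u t a b c : ℝ, G s y u t → G (s + a) (y + b) (u + c) (t + b * (2 * s + a)) →
    ∀ l : ℝ, 0 ≤ l → l ≤ 1 → G (s + l * a) (y + l * b) (u + l * c) (t + l * b * (2 * s + l * a))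

theorem Cv.pt {G : ℝ → ℝ → ℝ → ℝ → Prop} (h : Cv G) {s1 y1 u1 t1 s2 y2 u2 t2 s3 y3 u3 t3 : ℝ}
    (l : ℝ) (h1 : G s1 y1 u1 t1) (h3 : G s3 y3 u3 t3) (e : t3 = t1 + (y3 - y1) * (s1 + s3))
    (l0 : 0 ≤ l) (l1 : l ≤ 1) (es : s2 = s1 + l * (s3 - s1)) (ey : y2 = y1 + l * (y3 - y1))
    (eu : u2 = u1 + l * (u3 - u1)) (et : t2 = t1 + l * (y3 - y1) * (2 * s1 + l * (s3 - s1))) :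
    G s2 y2 u2 t2 := by
  have := h s1 y1 u1 t1 (s3 - s1) (y3 - y1) (u3 - u1) h1
    (by
      have e1 : s1 + (s3 - s1) = s3 := by ring
      have e2 : y1 + (y3 - y1) = y3 := by ring
      have e3 : u1 + (u3 - u1) = u3 := by ring
      have e4 : t1 + (y3 - y1) * (2 * s1 + (s3 - s1)) = t3 := by rw [e]; ring
      rw [e1, e2, e3, e4]; exact h3) l l0 l1
  rw [es, ey, eu, et]; exact this

theorem Cv.xl {G : ℝ → ℝ → ℝ → ℝ → Prop} (h : Cv G) {s1 s2 s3 y u t : ℝ}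
    (h1 : G s1 y u t) (h3 : G s3 y u t) (h12 : s1 ≤ s2) (h23 : s2 ≤ s3) : G s2 y u t := by
  rcases eq_or_lt_of_le h12 with h0 | h0
  · rw [← h0]; exact h1
  have hp : 0 < s3 - s1 := by linarith
  refine h.pt ((s2 - s1) / (s3 - s1)) h1 h3 (by ring) (by apply div_nonneg <;> linarith)
    (by rw [div_le_one hp]; linarith) (by field_simp; ring) (by ring) (by ring) (by ring)

theorem Cv.step {G : ℝ → ℝ → ℝ → ℝ → Prop} (h : Cv G) {r : ℝ}
    (g1 : ∀ y u t, |y| < r → |u| < r → |t| < r → G 1 y u t)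
    {K k y u t dy du : ℝ} (hk : 0 ≤ k) (hK : k + 1 ≤ K)
    (b0 : |y| < r) (b1 : |u| < r) (b2 : |t| < r)
    (b3 : |y + (k + 2) * dy| < r) (b4 : |u + (k + 2) * du| < r)
    (b5 : |t + (k + 2) * dy * (-k)| < r)
    (hG : G (-K) y u t) : G (-k) (y + dy) (u + du) (t - (2 * k + 1) * dy) := by
  have hA : G (-k - 1) y u t := h.xl hG (g1 y u t b0 b1 b2) (by linarith) (by linarith)
  have hB := g1 _ _ _ b3 b4 b5
  have hp : 0 < k + 2 := by linarith
  refine h.pt (1 / (k + 2)) hA hB (by ring) (by positivity) (by rw [div_le_one hp]; linarith)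
    (by field_simp; ring) (by field_simp; ring) (by field_simp; ring) (by field_simp; ring)

theorem Cv.box {G : ℝ → ℝ → ℝ → ℝ → Prop} (h : Cv G) {r : ℝ} (hr : 0 < r)
    (g1 : ∀ y u t, |y| < r → |u| < r → |t| < r → G 1 y u t)
    (hn : ∀ ε > 0, ∃ s y u t, |s| < 1 ∧ |y| < ε ∧ |u| < ε ∧ |t| < ε ∧ ¬ G s y u t) :
    ∀ y u t, |y| < r / 100 → |u| < r / 100 → |t| < r / 100 → ¬ G (-30) y u t := by
  intro y u t hy hu ht hG
  obtain ⟨s', y', u', t', hs', hy', hu', ht', hn'⟩ := hn (r / 100) (by positivity)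
  apply hn'
  rw [abs_lt] at *
  obtain ⟨d, hd⟩ : ∃ d, d = -((t' - t) + 3 * (y' - y)) / 18 := ⟨_, rfl⟩
  have d1 : d < r / 200 := by rw [hd]; linarith
  have d2 : -(r / 200) < d := by rw [hd]; linarith
  have s1 := h.step (dy := d) (du := u' - u) (k := 10) g1 (by norm_num) (by norm_num)
    (by rw [abs_lt]; constructor <;> linarith) (by rw [abs_lt]; constructor <;> linarith)
    (by rw [abs_lt]; constructor <;> linarith) (by rw [abs_lt]; constructor <;> linarith)
    (by rw [abs_lt]; constructor <;> linarith) (by rw [abs_lt]; constructor <;> linarith) hG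
  have s2 := h.step (dy := y' - y - d) (du := 0) (k := 1) g1 (by norm_num) (by norm_num)
    (by rw [abs_lt]; constructor <;> linarith) (by rw [abs_lt]; constructor <;> linarith)
    (by rw [abs_lt]; constructor <;> linarith) (by rw [abs_lt]; constructor <;> linarith)
    (by rw [abs_lt]; constructor <;> linarith) (by rw [abs_lt]; constructor <;> linarith) s1
  have e1 : y + d + (y' - y - d) = y' := by ring
  have e2 : u + (u' - u) + 0 = u' := by ring
  have e3 : t - (2 * 10 + 1) * d - (2 * 1 + 1) * (y' - y - d) = t' := by rw [hd]; ring
  rw [e1, e2, e3] at s2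
  exact h.xl s2 (g1 y' u' t' (by rw [abs_lt]; constructor <;> linarith)
    (by rw [abs_lt]; constructor <;> linarith) (by rw [abs_lt]; constructor <;> linarith))
    hs'.1.le hs'.2.le

structure Epi (G : ℝ → ℝ → ℝ → ℝ → Prop) (φ : ℝ → ℝ → ℝ → ℝ) (ρ : ℝ) : Prop where
  hρ : 0 < ρ
  c1 : Cv G
  c2 : Cv (fun s y u t => ¬ G s y u t)
  hb : ∀ y u t : ℝ, |y| < ρ → |u| < ρ → |t| < ρ → |φ y u t| ≤ 30
  hu : ∀ y u t s : ℝ, |y| < ρ → |u| < ρ → |t| < ρ → φ y u t < s → G s y u t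
  hl : ∀ y u t s : ℝ, |y| < ρ → |u| < ρ → |t| < ρ → s < φ y u t → ¬ G s y u t

theorem exists_epi {G : ℝ → ℝ → ℝ → ℝ → Prop} (c1 : Cv G)
    (c2 : Cv (fun s y u t => ¬ G s y u t)) {r : ℝ} (hr : 0 < r)
    (g1 : ∀ y u t, |y| < r → |u| < r → |t| < r → G 1 y u t)
    (hn : ∀ ε > 0, ∃ s y u t, |s| < 1 ∧ |y| < ε ∧ |u| < ε ∧ |t| < ε ∧ ¬ G s y u t) :
    ∃ φ, Epi G φ (r / 100) := by
  have hbox := c1.box hr g1 hn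
  have key : ∀ y u t, ∃ f : ℝ, |y| < r / 100 → |u| < r / 100 → |t| < r / 100 →
      |f| ≤ 30 ∧ (∀ s, f < s → G s y u t) ∧ (∀ s, s < f → ¬ G s y u t) := by
    intro y u t
    by_cases hh : |y| < r / 100 ∧ |u| < r / 100 ∧ |t| < r / 100
    swap
    · exact ⟨0, fun a b c => absurd ⟨a, b, c⟩ hh⟩
    obtain ⟨hy, hu, ht⟩ := hh
    have n30 := hbox y u t hy hu ht
    have p1 := g1 y u t (by linarith) (by linarith) (by linarith)
    have ub : ∀ s, ¬ G s y u t → s ≤ 1 := by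
      intro s hs
      by_contra hc
      push Not at hc
      exact c2.xl (s1 := -30) (s2 := 1) (s3 := s) n30 hs (by norm_num) hc.le p1
    have bdd : BddAbove {s | ¬ G s y u t} := ⟨1, fun s hs => ub s hs⟩
    have hne : ({s | ¬ G s y u t} : Set ℝ).Nonempty := ⟨-30, n30⟩
    refine ⟨sSup {s | ¬ G s y u t}, fun _ _ _ => ⟨?_, ?_, ?_⟩⟩
    · rw [abs_le]
      constructor
      · exact le_csSup bdd n30
      · have : sSup {s | ¬ G s y u t} ≤ 1 := csSup_le hne (fun s hs => ub s hs)
        linarith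
    · intro s hs
      by_contra hc
      exact absurd (le_csSup bdd hc) (not_le.2 hs)
    · intro s hs hG
      obtain ⟨s', hs', hlt⟩ := exists_lt_of_lt_csSup hne hs
      exact hs' (c1.xl hG p1 hlt.le (ub s' hs'))
  choose φ hφ using key
  exact ⟨φ, by positivity, c1, c2, fun y u t a b c => (hφ y u t a b c).1,
    fun y u t s a b c => (hφ y u t a b c).2.1 s, fun y u t s a b c => (hφ y u t a b c).2.2 s⟩

theorem Epi.slice {G : ℝ → ℝ → ℝ → ℝ → Prop} {φ : ℝ → ℝ → ℝ → ℝ} {ρ : ℝ} (h : Epi G φ ρ)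
    {k m : ℝ} (hk : |k| ≤ 1) (hm : |m| ≤ ρ / 2) :
    HH (fun s y t => G s y (k * y + m) t) (fun y t => φ y (k * y + m) t) 30 (ρ / 2) := by
  have hρ := h.hρ
  have hbx : ∀ y, |y| < ρ / 2 → |k * y + m| < ρ := by
    intro y hy
    calc |k * y + m| ≤ |k * y| + |m| := abs_add_le _ _
      _ = |k| * |y| + |m| := by rw [abs_mul]
      _ ≤ 1 * |y| + |m| := by gcongr
      _ < ρ := by linarith
  have gen : ∀ H : ℝ → ℝ → ℝ → ℝ → Prop, Cv H → ∀ S a T y1 y2 y3 : ℝ,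
      0 < (y2 - y1) * (y3 - y2) →
      H (S + a * y1) y1 (k * y1 + m) (T + 2 * S * y1 + a * y1 ^ 2) →
      H (S + a * y3) y3 (k * y3 + m) (T + 2 * S * y3 + a * y3 ^ 2) →
      H (S + a * y2) y2 (k * y2 + m) (T + 2 * S * y2 + a * y2 ^ 2) := by
    intro H hH S a T y1 y2 y3 hpos h1 h3
    have hne : y3 - y1 ≠ 0 := by
      intro h0
      have : y3 = y1 := by linarith
      rw [this] at hpos
      nlinarith [sq_nonneg (y2 - y1)]
    obtain ⟨l, hl⟩ : ∃ l, l * (y3 - y1) = y2 - y1 := ⟨(y2 - y1) / (y3 - y1), by field_simp⟩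
    have hq : 0 < (y3 - y1) ^ 2 := by positivity
    have hll : 0 < l * (1 - l) := by
      have e : (y2 - y1) * (y3 - y2) = (l * (1 - l)) * (y3 - y1) ^ 2 := by
        have : y3 - y2 = (1 - l) * (y3 - y1) := by linarith
        rw [this, ← hl]; ring
      rw [e] at hpos
      exact pos_of_mul_pos_left hpos hq.le
    have hy2 : y2 = y1 + l * (y3 - y1) := by linarith
    refine hH.pt l h1 h3 (by ring) (by nlinarith) (by nlinarith) ?_ hy2 ?_ ?_
    · rw [hy2]; ring
    · rw [hy2]; ring
    · rw [hy2]; ring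
  refine ⟨by norm_num, by linarith, gen G h.c1, gen _ h.c2, ?_, ?_, ?_⟩
  · intro y t hy ht
    exact h.hb y _ t (by linarith) (hbx y hy) (by linarith)
  · intro y t s hy ht hs
    exact h.hu y _ t s (by linarith) (hbx y hy) (by linarith) hs
  · intro y t s hy ht hs
    exact h.hl y _ t s (by linarith) (hbx y hy) (by linarith) hs

theorem Epi.aff {G : ℝ → ℝ → ℝ → ℝ → Prop} {φ : ℝ → ℝ → ℝ → ℝ} {ρ : ℝ} (h : Epi G φ ρ)
    {y t u1 u2 u3 l : ℝ} (hy : |y| < ρ) (ht : |t| < ρ) (h1 : |u1| < ρ) (h2 : |u2| < ρ)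
    (h3 : |u3| < ρ) (l0 : 0 ≤ l) (l1 : l ≤ 1) (e : u2 = u1 + l * (u3 - u1)) :
    φ y u2 t = φ y u1 t + l * (φ y u3 t - φ y u1 t) := by
  apply le_antisymm
  · apply le_of_forall_pos_le_add
    intro ε hε
    by_contra hc
    push Not at hc
    apply h.hl y u2 t _ hy h2 ht hc
    exact h.c1.pt l (h.hu y u1 t (φ y u1 t + ε) hy h1 ht (by linarith))
      (h.hu y u3 t (φ y u3 t + ε) hy h3 ht (by linarith)) (by ring) l0 l1 (by ring) (by ring) e
      (by ring)
  · apply le_of_forall_pos_sub_le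
    intro ε hε
    by_contra hc
    push Not at hc
    have := h.hu y u2 t _ hy h2 ht hc
    refine h.c2.pt l (h.hl y u1 t (φ y u1 t - ε) hy h1 ht (by linarith))
      (h.hl y u3 t (φ y u3 t - ε) hy h3 ht (by linarith)) (by ring) l0 l1 (by ring) (by ring) e
      (by ring) this

theorem Epi.lin {G : ℝ → ℝ → ℝ → ℝ → Prop} {φ : ℝ → ℝ → ℝ → ℝ} {ρ : ℝ} (h : Epi G φ ρ) :
    ∃ A B C c r : ℝ, 0 < r ∧ r ≤ ρ ∧ |c| * r ≤ 1 / 2 ∧ ∀ y u t, |y| < r → |u| < r → |t| < r →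
      (1 - c * y) * φ y u t = A + B * y + C * u - c * t := by
  have hρ := h.hρ
  obtain ⟨m, hm⟩ : ∃ m, m = ρ / 2 := ⟨_, rfl⟩
  have mp : 0 < m := by linarith
  have am : |m| = m := abs_of_pos mp
  obtain ⟨A0, B0, c0, r0, p0, E0⟩ := (h.slice (k := 0) (m := 0) (by simp) (by simp; linarith)).main
  obtain ⟨A1, B1, c1, r1, p1, E1⟩ := (h.slice (k := 0) (m := m) (by simp) (by rw [am]; linarith)).main
  obtain ⟨A2, B2, c2, r2, p2, E2⟩ :=
    (h.slice (k := 0) (m := -m) (by simp) (by rw [abs_neg, am]; linarith)).main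
  obtain ⟨A3, B3, c3, r3, p3, E3⟩ := (h.slice (k := 1) (m := 0) (by simp) (by simp; linarith)).main
  simp only [zero_mul, zero_add, one_mul, add_zero] at E0 E1 E2 E3
  obtain ⟨R, Rp, R0, R1, R2, R3, Rm, Rc⟩ : ∃ R : ℝ, 0 < R ∧ R ≤ r0 ∧ R ≤ r1 ∧ R ≤ r2 ∧ R ≤ r3 ∧
      R ≤ m ∧ |c0| * R ≤ 1 / 2 := by
    have q : 0 < 1 / (2 * (|c0| + 1)) := by positivity
    refine ⟨min r0 (min r1 (min r2 (min r3 (min m (1 / (2 * (|c0| + 1))))))), ?_, ?_, ?_, ?_, ?_,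
      ?_, ?_⟩
    · simp only [lt_min_iff]; exact ⟨p0, p1, p2, p3, mp, q⟩
    · simp
    · simp
    · simp
    · simp
    · simp
    · have : min r0 (min r1 (min r2 (min r3 (min m (1 / (2 * (|c0| + 1))))))) ≤
        1 / (2 * (|c0| + 1)) := by simp
      calc _ ≤ |c0| * (1 / (2 * (|c0| + 1))) := by gcongr
        _ ≤ 1 / 2 := by
          rw [mul_one_div, div_le_iff₀ (by positivity)]; linarith
  have mid : ∀ y t, |y| < R → |t| < R → 2 * φ y 0 t = φ y m t + φ y (-m) t := by
    intro y t hy ht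
    have := h.aff (y := y) (t := t) (u1 := m) (u2 := 0) (u3 := -m) (l := 1 / 2) (by linarith)
      (by linarith) (by rw [am]; linarith) (by simpa using hρ) (by rw [abs_neg, am]; linarith)
      (by norm_num) (by norm_num) (by ring)
    linarith
  obtain ⟨z, hz⟩ : ∃ z, z = R / 2 := ⟨_, rfl⟩
  have zp : 0 < z := by linarith
  have az : |z| < R := by rw [abs_of_pos zp]; linarith
  have a0 : |(0 : ℝ)| < R := by simpa using Rp
  have dif : ∀ y, |y| < R → 2 * c0 * ((1 - c1 * y) * (1 - c2 * y)) =
      c1 * ((1 - c0 * y) * (1 - c2 * y)) + c2 * ((1 - c0 * y) * (1 - c1 * y)) := by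
    intro y hy
    have f0 := E0 y z (by linarith) (by linarith)
    have f1 := E1 y z (by linarith) (by linarith)
    have f2 := E2 y z (by linarith) (by linarith)
    have g0 := E0 y 0 (by linarith) (by linarith)
    have g1 := E1 y 0 (by linarith) (by linarith)
    have g2 := E2 y 0 (by linarith) (by linarith)
    have m1 := mid y z hy az
    have m0 := mid y 0 hy a0
    apply mul_left_cancel₀ zp.ne'
    linear_combination (2 * (1 - c1 * y) * (1 - c2 * y)) * (f0 - g0) -
      ((1 - c0 * y) * (1 - c2 * y)) * (f1 - g1) - ((1 - c0 * y) * (1 - c1 * y)) * (f2 - g2) -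
      ((1 - c0 * y) * (1 - c1 * y) * (1 - c2 * y)) * (m1 - m0)
  have d0 := dif 0 a0
  have d1 := dif z az
  have s1 : 2 * c0 = c1 + c2 := by linarith
  have s2 : c0 * (c1 + c2) = 2 * (c1 * c2) := by
    apply mul_left_cancel₀ zp.ne'
    linear_combination s1 - d1
  have s3 : c1 = c2 := by
    have : (c1 - c2) ^ 2 = 0 := by linear_combination (-(c1 + c2)) * s1 + 2 * s2
    have := pow_eq_zero_iff (two_ne_zero) |>.1 this
    linarith
  have s4 : c1 = c0 := by linarith
  have s5 : c2 = c0 := by linarith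
  subst s4
  subst s5
  have nz : ∀ y, |y| < R → 0 < 1 - c2 * y := by
    intro y hy
    have : |c2 * y| ≤ 1 / 2 := by
      rw [abs_mul]
      exact le_trans (by gcongr) Rc
    rw [abs_le] at this
    linarith
  -- interpolation in u
  have itp : ∀ y u t, |y| < R → |u| < R → |t| < R →
      φ y u t = φ y 0 t + u / m * (φ y m t - φ y 0 t) := by
    intro y u t hy hu ht
    have hu' := abs_lt.1 hu
    rcases le_total 0 u with h0 | h0
    · exact h.aff (by linarith) (by linarith) (by simpa using hρ) (by linarith)
        (by rw [am]; linarith) (by positivity) (by rw [div_le_one mp]; linarith)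
        (by field_simp; ring)
    · have := h.aff (y := y) (t := t) (u1 := 0) (u2 := u) (u3 := -m) (l := -u / m) (by linarith)
        (by linarith) (by simpa using hρ) (by linarith)
        (by rw [abs_neg, am]; linarith) (by apply div_nonneg <;> linarith)
        (by rw [div_le_one mp]; linarith) (by field_simp; ring)
      rw [this]
      have m0 := mid y t hy ht
      have : φ y (-m) t = 2 * φ y 0 t - φ y m t := by linarith
      rw [this]; ring
  have full : ∀ y u t, |y| < R → |u| < R → |t| < R →
      (1 - c2 * y) * φ y u t = A0 + B0 * y - c2 * t + u / m * (A1 - A0 + (B1 - B0) * y) := by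
    intro y u t hy hu ht
    rw [itp y u t hy hu ht]
    have f0 := E0 y t (by linarith) (by linarith)
    have f1 := E1 y t (by linarith) (by linarith)
    linear_combination f0 + u / m * (f1 - f0)
  have e3 : c3 = c2 := by
    have f0 := full z z z az az az
    have g0 := full z z 0 az az a0
    have f3 := E3 z z (by linarith) (by linarith)
    have g3 := E3 z 0 (by linarith) (by linarith)
    apply mul_left_cancel₀ zp.ne'
    linear_combination (1 - c2 * z) * (f3 - g3) - (1 - c3 * z) * (f0 - g0)
  subst e3
  have azn : |-z| < R := by rwa [abs_neg]
  have q0 := full 0 0 0 a0 a0 a0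
  have q1 := full z z 0 az az a0
  have q2 := full (-z) (-z) 0 azn azn a0
  have w0 := E3 0 0 (by linarith) (by linarith)
  have w1 := E3 z 0 (by linarith) (by linarith)
  have w2 := E3 (-z) 0 (by linarith) (by linarith)
  rw [w0] at q0
  rw [w1] at q1
  rw [w2] at q2
  have hB : B1 = B0 := by
    have : z ^ 2 / m * (B1 - B0) = 0 := by linear_combination q0 - q1 / 2 - q2 / 2
    have hq : z ^ 2 / m ≠ 0 := by positivity
    have := (mul_eq_zero.1 this).resolve_left hq
    linarith
  refine ⟨A0, B0, (A1 - A0) / m, c3, R, Rp, by linarith, Rc, ?_⟩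
  intro y u t hy hu ht
  rw [full y u t hy hu ht, hB]; ring

theorem frontier_lem {E Ω : Set (Fin 4 → ℝ)} {L : (Fin 4 → ℝ) → ℝ} {d : Fin 4 → ℝ}
    (hΩ : IsOpen Ω) (hL : Continuous L) (hd : ∀ v (ε : ℝ), L (v + ε • d) = L v + ε)
    (hp : ∀ v ∈ Ω, 0 < L v → v ∈ E) (hm : ∀ v ∈ Ω, L v < 0 → v ∉ E) :
    frontier E ∩ Ω = {v | L v = 0} ∩ Ω := by
  ext v
  constructor
  · rintro ⟨hf, hv⟩
    refine ⟨?_, hv⟩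
    rcases lt_trichotomy (L v) 0 with h | h | h
    · exfalso
      have ho : IsOpen (Ω ∩ {w | L w < 0}) := hΩ.inter (isOpen_lt hL continuous_const)
      obtain ⟨w, hw, hwE⟩ := mem_closure_iff.1 hf.1 _ ho ⟨hv, h⟩
      exact hm w hw.1 hw.2 hwE
    · exact h
    · exfalso
      have ho : IsOpen (Ω ∩ {w | 0 < L w}) := hΩ.inter (isOpen_lt continuous_const hL)
      exact hf.2 (mem_interior.2 ⟨_, fun w hw => hp w hw.1 hw.2, ho, ⟨hv, h⟩⟩)
  · rintro ⟨h, hv⟩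
    refine ⟨?_, hv⟩
    have h' : L v = 0 := h
    have ct : Continuous (fun ε : ℝ => v + ε • d) := by fun_prop
    have tt : Filter.Tendsto (fun ε : ℝ => v + ε • d) (nhds 0) (nhds v) := by
      have := ct.tendsto 0
      simpa using this
    constructor
    · have t1 := tt.mono_left (nhdsWithin_le_nhds (s := Set.Ioi 0))
      refine mem_closure_of_tendsto t1 ?_
      filter_upwards [t1.eventually (hΩ.mem_nhds hv), self_mem_nhdsWithin] with ε h1 h2
      exact hp _ h1 (by rw [hd, h']; simpa using h2)
    · intro hi
      have t1 := tt.mono_left (nhdsWithin_le_nhds (s := Set.Iio 0))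
      have : ∀ᶠ ε : ℝ in nhdsWithin 0 (Set.Iio 0), False := by
        filter_upwards [t1.eventually (hΩ.mem_nhds hv),
          t1.eventually (isOpen_interior.mem_nhds hi), self_mem_nhdsWithin] with ε h1 h3 h2
        exact hm _ h1 (by rw [hd, h']; simpa using h2) (interior_subset h3)
      exact this.exists.elim (fun _ h => h)


end HH

/-- **Monotone `(pX+qY)`-epigraphs (local statement):** near the origin the boundary
of `E` coincides with a plane `rx + sy + cu + bt = 0` not containing `(p,q,0,0)`. -/
theorem monotone_epigraph_local
    (E : Set (Fin 4 → ℝ)) (hE : PreciselyMonotone E)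
    (h0 : (0 : Fin 4 → ℝ) ∈ frontier E)
    (p q : ℝ) (hpq : (p, q) ≠ ((0 : ℝ), (0 : ℝ)))
    (hint : (![p, q, 0, 0] : Fin 4 → ℝ) ∈ interior E) :
    ∃ Ω : Set (Fin 4 → ℝ), IsOpen Ω ∧ (0 : Fin 4 → ℝ) ∈ Ω ∧
      ∃ r s c b : ℝ, r * p + s * q ≠ 0 ∧
        frontier E ∩ Ω =
          {v : Fin 4 → ℝ | r * v 0 + s * v 1 + c * v 2 + b * v 3 = 0} ∩ Ω := by
  have hN : 0 < p ^ 2 + q ^ 2 := by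
    by_contra hc
    apply hpq
    have h1 : p = 0 := by nlinarith [sq_nonneg p, sq_nonneg q]
    have h2 : q = 0 := by nlinarith [sq_nonneg p, sq_nonneg q]
    rw [h1, h2]
  obtain ⟨N, hNd⟩ : ∃ N, N = p ^ 2 + q ^ 2 := ⟨_, rfl⟩
  rw [← hNd] at hN
  have hN' := hN.ne'
  obtain ⟨Φ, hΦ⟩ : ∃ Φ : ℝ → ℝ → ℝ → ℝ → Fin 4 → ℝ, Φ = fun s y u t =>
    ![s * p - y * q, s * q + y * p, u, 2 * N * (y * s - t)] := ⟨_, rfl⟩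
  obtain ⟨cs, hcs⟩ : ∃ cs : (Fin 4 → ℝ) → ℝ, cs = fun v => (v 0 * p + v 1 * q) / N := ⟨_, rfl⟩
  obtain ⟨cy, hcy⟩ : ∃ cy : (Fin 4 → ℝ) → ℝ, cy = fun v => (v 1 * p - v 0 * q) / N := ⟨_, rfl⟩
  obtain ⟨ct, hct⟩ : ∃ ct : (Fin 4 → ℝ) → ℝ, ct = fun v => cy v * cs v - v 3 / (2 * N) := ⟨_, rfl⟩
  have inv : ∀ v, Φ (cs v) (cy v) (v 2) (ct v) = v := by
    intro v
    rw [hΦ, hct]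
    ext i
    fin_cases i
    · simp [hcs, hcy]; field_simp; rw [hNd]; ring
    · simp [hcs, hcy]; field_simp; rw [hNd]; ring
    · simp
    · simp; field_simp
  have conv : ∀ C : Set (Fin 4 → ℝ), HRConvex C → HH.Cv (fun s y u t => Φ s y u t ∈ C) := by
    intro C hC s y u t a b c h1 h2 l l0 l1
    have key : ∀ l : ℝ, hmul (Φ s y u t) ![l * (a * p - b * q), l * (a * q + b * p), l * c, 0] =
        Φ (s + l * a) (y + l * b) (u + l * c) (t + l * b * (2 * s + l * a)) := by
      intro l
      rw [hΦ]
      ext i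
      fin_cases i
      · simp [hmul]; ring
      · simp [hmul]; ring
      · simp [hmul]
      · simp [hmul]; rw [hNd]; ring
    have k1 := key 1
    simp only [one_mul] at k1
    have := hC _ h1 (a * p - b * q) (a * q + b * p) c (by rw [k1]; exact h2) l l0 l1
    rw [key l] at this
    exact this
  have cA := conv E hE.1
  have cB := conv Eᶜ hE.2
  have contΦ : ∀ s, Continuous (fun w : ℝ × ℝ × ℝ => Φ s w.1 w.2.1 w.2.2) := by
    intro s
    rw [hΦ]
    refine continuous_pi ?_
    intro i
    fin_cases i <;> simp <;> fun_prop
  have contcs : Continuous cs := by rw [hcs]; fun_prop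
  have contcy : Continuous cy := by rw [hcy]; fun_prop
  have contct : Continuous ct := by rw [hct]; fun_prop
  have cs0 : cs 0 = 0 := by simp [hcs]
  have cy0 : cy 0 = 0 := by simp [hcy]
  have ct0 : ct 0 = 0 := by simp [hct, cs0]
  -- box around (1,0,0,0)
  obtain ⟨r, hr, g1⟩ : ∃ r : ℝ, 0 < r ∧ ∀ y u t, |y| < r → |u| < r → |t| < r → Φ 1 y u t ∈ E := by
    have ho : IsOpen ((fun w : ℝ × ℝ × ℝ => Φ 1 w.1 w.2.1 w.2.2) ⁻¹' interior E) :=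
      isOpen_interior.preimage (contΦ 1)
    have hm : ((0, 0, 0) : ℝ × ℝ × ℝ) ∈
        ((fun w : ℝ × ℝ × ℝ => Φ 1 w.1 w.2.1 w.2.2) ⁻¹' interior E) := by
      have : Φ 1 0 0 0 = ![p, q, 0, 0] := by rw [hΦ]; simp
      show Φ 1 0 0 0 ∈ interior E
      rw [this]; exact hint
    obtain ⟨r, hr, hb⟩ := Metric.isOpen_iff.1 ho _ hm
    refine ⟨r, hr, fun y u t hy hu ht => interior_subset (hb (a := (y, u, t)) ?_)⟩
    simp only [Metric.mem_ball, Prod.dist_eq, Real.dist_eq, sub_zero]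
    exact max_lt hy (max_lt hu ht)
  have boxopen : ∀ ε : ℝ, IsOpen {v : Fin 4 → ℝ | |cy v| < ε ∧ |v 2| < ε ∧ |ct v| < ε} := by
    intro ε
    refine IsOpen.inter ?_ (IsOpen.inter ?_ ?_)
    · exact isOpen_lt contcy.abs continuous_const
    · exact isOpen_lt (continuous_apply (2 : Fin 4)).abs continuous_const
    · exact isOpen_lt contct.abs continuous_const
  have hn : ∀ ε > 0, ∃ s y u t, |s| < 1 ∧ |y| < ε ∧ |u| < ε ∧ |t| < ε ∧ ¬ Φ s y u t ∈ E := by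
    intro ε hε
    have h0' : (0 : Fin 4 → ℝ) ∈ closure Eᶜ := by
      rw [closure_compl]; exact h0.2
    have ho : IsOpen ({v : Fin 4 → ℝ | |cs v| < 1} ∩
        {v : Fin 4 → ℝ | |cy v| < ε ∧ |v 2| < ε ∧ |ct v| < ε}) :=
      (isOpen_lt (by fun_prop) continuous_const).inter (boxopen ε)
    obtain ⟨v, hv, hvE⟩ := mem_closure_iff.1 h0' _ ho
      (by simp [cs0, cy0, ct0, hε])
    exact ⟨cs v, cy v, v 2, ct v, hv.1, hv.2.1, hv.2.2.1, hv.2.2.2, by rw [inv]; exact hvE⟩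
  obtain ⟨φ, hφ⟩ := HH.exists_epi cA cB hr g1 hn
  obtain ⟨A, B, C, c, R, Rp, Rr, Rc, hlin⟩ := hφ.lin
  obtain ⟨L, hL⟩ : ∃ L : (Fin 4 → ℝ) → ℝ, L = fun v =>
    (p + B * q) / N * v 0 + (q - B * p) / N * v 1 + (-C) * v 2 + (-c / (2 * N)) * v 3 := ⟨_, rfl⟩
  have Leq : ∀ v, L v = (1 - c * cy v) * cs v - (B * cy v + C * v 2 - c * ct v) := by
    intro v
    rw [hL, hct, hcs, hcy]; field_simp; ring
  have fl := HH.frontier_lem (E := E) (L := fun v => L v - A) (d := ![p, q, 0, 0]) (boxopen R)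
    (by rw [hL]; fun_prop)
    (by
      intro v ε
      rw [hL]; simp; field_simp; rw [hNd]; ring)
    (by
      rintro v ⟨h1, h2, h3⟩ hp
      have e := hlin _ _ _ h1 h2 h3
      have l := Leq v
      have hpos : 0 < 1 - c * cy v := by
        have : |c * cy v| ≤ 1 / 2 := by
          rw [abs_mul]; exact le_trans (by gcongr) Rc
        rw [abs_le] at this; linarith
      have := hφ.hu (cy v) (v 2) (ct v) (cs v) (by linarith) (by linarith) (by linarith)
        (lt_of_mul_lt_mul_left (by linarith) hpos.le)
      rwa [inv] at this)
    (by
      rintro v ⟨h1, h2, h3⟩ hp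
      have e := hlin _ _ _ h1 h2 h3
      have l := Leq v
      have hpos : 0 < 1 - c * cy v := by
        have : |c * cy v| ≤ 1 / 2 := by
          rw [abs_mul]; exact le_trans (by gcongr) Rc
        rw [abs_le] at this; linarith
      have := hφ.hl (cy v) (v 2) (ct v) (cs v) (by linarith) (by linarith) (by linarith)
        (lt_of_mul_lt_mul_left (by linarith) hpos.le)
      rwa [inv] at this)
  have m0 : (0 : Fin 4 → ℝ) ∈ {v : Fin 4 → ℝ | |cy v| < R ∧ |v 2| < R ∧ |ct v| < R} := by
    simp [cy0, ct0, Rp]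
  have hA : A = 0 := by
    have : (0 : Fin 4 → ℝ) ∈ frontier E ∩ {v : Fin 4 → ℝ | |cy v| < R ∧ |v 2| < R ∧ |ct v| < R} :=
      ⟨h0, m0⟩
    rw [fl] at this
    have h2 : L 0 - A = 0 := this.1
    have h3 : L 0 = 0 := by rw [hL]; simp
    linarith
  refine ⟨_, boxopen R, m0, (p + B * q) / N, (q - B * p) / N, -C, -c / (2 * N), ?_, ?_⟩
  · have : (p + B * q) / N * p + (q - B * p) / N * q = 1 := by
      field_simp; rw [hNd]; ring
    rw [this]; exact one_ne_zero
  · rw [fl, hA, hL]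
    simp only [sub_zero]
end
end

section
/- Let E ⊆ ℝ⁴ = ℍ×ℝ be precisely monotone. Assume the origin (0,0,0,0) ∈ ∂E, that (1,0,0,0) ∈ Int(E), and that there exist real numbers a, b, c and an open neighborhood Ω of the origin in ℝ⁴ such that ∂E ∩ Ω = Σ ∩ Ω, where Σ = {(x,y,u,t) ∈ ℝ⁴ : x = ay + bt + cu}. Then ∂E = Σ. -/
/- The group `ℍ×ℝ`: `ℝ⁴` with coordinates `(x,y,u,t)` and law
`(x,y,u,t)·(x',y',u',t') = (x+x', y+y', u+u', t+t'+2(yx'−y'x))`. -/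

noncomputable section

def PT (x y u t a b c s : ℝ) : Fin 4 → ℝ :=
  ![x + s * a, y + s * b, u + s * c, t + 2 * s * (y * a - x * b)]

def ell (a b c : ℝ) (v : Fin 4 → ℝ) : ℝ := v 0 - a * v 1 - b * v 3 - c * v 2

lemma hmul_PT (x y u t a b c s k : ℝ) :
    hmul (PT x y u t a b c s) ![k * a, k * b, k * c, 0] = PT x y u t a b c (s + k) := by
  ext i
  fin_cases i <;> simp [hmul, PT] <;> ring

lemma conv_line {C : Set (Fin 4 → ℝ)} (hC : HRConvex C) (x y u t a b c s1 s s2 : ℝ)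
    (h1 : s1 ≤ s) (h2 : s ≤ s2) (m1 : PT x y u t a b c s1 ∈ C) (m2 : PT x y u t a b c s2 ∈ C) :
    PT x y u t a b c s ∈ C := by
  rcases eq_or_lt_of_le (h1.trans h2) with h | h
  · have : s = s1 := by linarith
    rwa [this]
  · have hd : 0 < s2 - s1 := by linarith
    have key := hC _ m1 ((s2 - s1) * a) ((s2 - s1) * b) ((s2 - s1) * c)
      (by rw [hmul_PT]; convert m2 using 2; ring)
      ((s - s1) / (s2 - s1)) (by apply div_nonneg <;> linarith)
      (by rw [div_le_one hd]; linarith)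
    rw [← mul_assoc, ← mul_assoc, ← mul_assoc, hmul_PT, div_mul_cancel₀ _ hd.ne'] at key
    convert key using 2
    ring

lemma mono_line {E : Set (Fin 4 → ℝ)} (hE : PreciselyMonotone E) (x y u t a b c s1 s2 s3 : ℝ)
    (h1 : s1 ≤ s2) (h2 : s2 ≤ s3) (m1 : PT x y u t a b c s1 ∉ E) (m2 : PT x y u t a b c s2 ∈ E) :
    PT x y u t a b c s3 ∈ E := by
  by_contra h
  exact conv_line hE.2 x y u t a b c s1 s2 s3 h1 h2 m1 h m2

lemma PT_cont (x y u t a b c : ℝ) : Continuous (PT x y u t a b c) := by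
  refine continuous_pi fun i => ?_
  fin_cases i <;> simp [PT] <;> fun_prop

lemma pm_compl {E : Set (Fin 4 → ℝ)} (hE : PreciselyMonotone E) : PreciselyMonotone Eᶜ :=
  ⟨hE.2, by rw [compl_compl]; exact hE.1⟩

/-- small symmetric parameters staying in an open set -/
lemma small_param {W : Set (Fin 4 → ℝ)} (hW : IsOpen W) (f : ℝ → (Fin 4 → ℝ))
    (hf : Continuous f) (h0 : f 0 ∈ W) : ∃ δ : ℝ, 0 < δ ∧ δ ≤ 1 ∧ f δ ∈ W ∧ f (-δ) ∈ W := by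
  have ho : IsOpen (f ⁻¹' W) := hW.preimage hf
  obtain ⟨r, hr, hb⟩ := Metric.isOpen_iff.1 ho 0 h0
  refine ⟨min (r / 2) 1, by positivity, min_le_right _ _, ?_, ?_⟩
  · apply hb
    have : 0 < min (r / 2) 1 := by positivity
    rw [Metric.mem_ball, Real.dist_eq, sub_zero, abs_of_pos this]
    linarith [min_le_left (r / 2) 1]
  · apply hb
    have : 0 < min (r / 2) 1 := by positivity
    rw [Metric.mem_ball, Real.dist_eq, sub_zero, abs_neg, abs_of_pos this]
    linarith [min_le_left (r / 2) 1]

def Loc (E W : Set (Fin 4 → ℝ)) (a b c σ : ℝ) : Prop :=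
  ∀ v ∈ W, (0 < σ * ell a b c v → v ∈ E) ∧ (σ * ell a b c v < 0 → v ∉ E)

lemma Loc.compl {E W : Set (Fin 4 → ℝ)} {a b c σ : ℝ} (h : Loc E W a b c σ) :
    Loc Eᶜ W a b c (-σ) := by
  intro v hv
  refine ⟨fun h1 => (h v hv).2 (by linarith), fun h1 h2 => h2 ((h v hv).1 (by linarith))⟩

lemma step1 {E W : Set (Fin 4 → ℝ)} (hE : PreciselyMonotone E) (hW : IsOpen W) {a b c σ : ℝ}
    (hl : Loc E W a b c σ) (x y u t α β γ : ℝ) (hm : PT x y u t α β γ 0 ∈ W)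
    (hz : ell a b c (PT x y u t α β γ 0) = 0)
    (hp : 0 < σ * ell a b c (PT x y u t α β γ 1)) : PT x y u t α β γ 1 ∈ E := by
  obtain ⟨δ, h0, h1, hd, hd'⟩ := small_param hW _ (PT_cont x y u t α β γ) hm
  have key : ∀ s, ell a b c (PT x y u t α β γ s) = s * ell a b c (PT x y u t α β γ 1) := by
    intro s
    simp [ell, PT] at hz ⊢
    linear_combination (1 - s) * hz
  refine mono_line hE _ _ _ _ _ _ _ (-δ) δ 1 (by linarith) h1 ?_ ?_
  · apply (hl _ hd').2
    rw [key]
    nlinarith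
  · apply (hl _ hd).1
    rw [key]
    have := mul_pos h0 hp
    linarith

lemma step1' {E W : Set (Fin 4 → ℝ)} (hE : PreciselyMonotone E) (hW : IsOpen W) {a b c σ : ℝ}
    (hl : Loc E W a b c σ) (x y u t α β γ : ℝ) (hm : PT x y u t α β γ 0 ∈ W)
    (hz : ell a b c (PT x y u t α β γ 0) = 0)
    (hp : σ * ell a b c (PT x y u t α β γ 1) < 0) : PT x y u t α β γ 1 ∉ E :=
  step1 (pm_compl hE) hW hl.compl x y u t α β γ hm hz (by linarith)

lemma step2 {E W : Set (Fin 4 → ℝ)} (hE : PreciselyMonotone E) (hW : IsOpen W) (h0 : 0 ∈ W)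
    {a b c σ : ℝ} (hl : Loc E W a b c σ) (p : Fin 4 → ℝ) (hne : p 0 - a * p 1 ≠ 0)
    (hp : 0 < σ * ell a b c p) : p ∈ E := by
  obtain ⟨l, hlam⟩ : ∃ l : ℝ, p 3 = 2 * l * (p 0 - a * p 1) :=
    ⟨p 3 / (2 * (p 0 - a * p 1)), by field_simp⟩
  have hL : ell a b c p ≠ 0 := by
    intro h
    simp [h] at hp
  obtain ⟨k, hk⟩ : ∃ k : ℝ, (1 + k) * ell a b c p = b * p 3 :=
    ⟨-1 + b * p 3 / ell a b c p, by field_simp; ring⟩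
  set w0 := p 0 - a * l with hw0
  set w1 := p 1 - l with hw1
  set w2 := p 2 with hw2
  have hτ : p 3 = 2 * l * (w0 - a * w1) := by rw [hlam, hw0, hw1]; ring
  have hpe : p = PT (a * l) l 0 0 w0 w1 w2 1 := by
    ext i
    fin_cases i <;> simp [PT, hw0, hw1, hw2]
    rw [hlam]; ring
  have hell : ell a b c p = w0 - a * w1 - b * p 3 - c * w2 := by
    simp only [ell, hw0, hw1, hw2]; ring
  have key : ∀ s, ell a b c (PT (a * l) l 0 0 w0 w1 w2 s) = s * ell a b c p := by
    intro s
    rw [hell, hτ]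
    simp [ell, PT]
    ring
  let M : ℝ → (Fin 4 → ℝ) := fun s =>
    ![s * ((1 + k) * w0), s * ((1 + k) * w1), s * ((1 + k) * w2), s * ((2 + k) * p 3)]
  have hMc : Continuous M := by
    refine continuous_pi fun i => ?_
    fin_cases i <;> simp [M] <;> fun_prop
  have hM0 : M 0 ∈ W := by
    convert h0
    ext i
    fin_cases i <;> simp [M]
  have hMP : ∀ s, PT (s * ((1 + k) * w0)) (s * ((1 + k) * w1)) (s * ((1 + k) * w2))
      (s * ((2 + k) * p 3)) (a * l - s * k * w0) (l - s * k * w1) (- s * k * w2) 0 = M s := by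
    intro s
    simp [PT, M]
  have hML : ∀ s, PT (s * ((1 + k) * w0)) (s * ((1 + k) * w1)) (s * ((1 + k) * w2))
      (s * ((2 + k) * p 3)) (a * l - s * k * w0) (l - s * k * w1) (- s * k * w2) 1
      = PT (a * l) l 0 0 w0 w1 w2 s := by
    intro s
    ext i
    fin_cases i <;> simp [PT] <;> (try rw [hτ]) <;> ring
  have hMz : ∀ s, ell a b c (M s) = 0 := by
    intro s
    rw [hell] at hk
    simp [ell, M]
    linear_combination s * hk
  obtain ⟨δ, hδ, h1, hd, hd'⟩ := small_param hW M hMc hM0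
  rw [hpe]
  have e := mul_pos hδ hp
  refine mono_line hE _ _ _ _ _ _ _ (-δ) δ 1 (by linarith) h1 ?_ ?_
  · rw [← hML]
    apply step1' hE hW hl
    · rwa [hMP]
    · rw [hMP, hMz]
    · rw [hML, key]; linarith
  · rw [← hML]
    apply step1 hE hW hl
    · rwa [hMP]
    · rw [hMP, hMz]
    · rw [hML, key]; linarith

lemma ell_cont (a b c : ℝ) : Continuous (ell a b c) := by
  unfold ell
  fun_prop

lemma step3 {E W : Set (Fin 4 → ℝ)} (hE : PreciselyMonotone E) (hW : IsOpen W) (h0 : 0 ∈ W)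
    {a b c σ : ℝ} (hl : Loc E W a b c σ) (p : Fin 4 → ℝ)
    (hp : 0 < σ * ell a b c p) : p ∈ E := by
  by_cases hne : p 0 - a * p 1 = 0
  · have hp0 : PT (p 0) (p 1) (p 2) (p 3) 1 0 0 0 = p := by
      ext i
      fin_cases i <;> simp [PT]
    have ho : IsOpen {v | 0 < σ * ell a b c v} :=
      isOpen_lt continuous_const (continuous_const.mul (ell_cont a b c))
    obtain ⟨δ, hδ, h1, hd, hd'⟩ := small_param ho _ (PT_cont (p 0) (p 1) (p 2) (p 3) 1 0 0)
      (by rw [hp0]; exact hp)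
    rw [← hp0]
    refine conv_line hE.1 _ _ _ _ _ _ _ (-δ) 0 δ (by linarith) hδ.le ?_ ?_
    · apply step2 hE hW h0 hl _ _ hd'
      simp [PT]
      intro h; linarith
    · apply step2 hE hW h0 hl _ _ hd
      simp [PT]
      intro h; linarith
  · exact step2 hE hW h0 hl p hne hp

lemma ell_convex (a b c σ r : ℝ) :
    Convex ℝ (Metric.ball (0 : Fin 4 → ℝ) r ∩ {v | 0 < σ * ell a b c v}) := by
  apply (convex_ball _ _).inter
  intro v hv w hw s t hs ht hst
  have e : ell a b c (s • v + t • w) = s * ell a b c v + t * ell a b c w := by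
    simp [ell]; ring
  simp only [Set.mem_ofPred_eq] at *
  rw [e]
  rcases eq_or_lt_of_le hs with h | h
  · have : t = 1 := by linarith
    subst this; rw [← h]; linarith
  · have := mul_pos h hv
    have := mul_nonneg ht hw.le
    linarith

/-- interior is midpoint-convex along the `x`-axis at the origin -/
lemma int_mid {C : Set (Fin 4 → ℝ)} (hC : HRConvex C) (δ : ℝ) (hδ : 0 < δ)
    (h1 : PT 0 0 0 0 1 0 0 δ ∈ interior C) (h2 : PT 0 0 0 0 1 0 0 (-δ) ∈ interior C) :
    (0 : Fin 4 → ℝ) ∈ interior C := by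
  have hc : ∀ s : ℝ, Continuous fun v : Fin 4 → ℝ => PT (v 0) (v 1) (v 2) (v 3) 1 0 0 s := by
    intro s
    refine continuous_pi fun i => ?_
    fin_cases i <;> simp [PT] <;> fun_prop
  rw [mem_interior]
  refine ⟨(fun v : Fin 4 → ℝ => PT (v 0) (v 1) (v 2) (v 3) 1 0 0 δ) ⁻¹' interior C ∩
    (fun v : Fin 4 → ℝ => PT (v 0) (v 1) (v 2) (v 3) 1 0 0 (-δ)) ⁻¹' interior C, ?_,
    (isOpen_interior.preimage (hc δ)).inter (isOpen_interior.preimage (hc (-δ))), ⟨h1, h2⟩⟩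
  rintro v ⟨hv1, hv2⟩
  have hp0 : PT (v 0) (v 1) (v 2) (v 3) 1 0 0 0 = v := by
    ext i
    fin_cases i <;> simp [PT]
  rw [← hp0]
  exact conv_line hC _ _ _ _ _ _ _ (-δ) 0 δ (by linarith) hδ.le (interior_subset hv2)
    (interior_subset hv1)

lemma side {E : Set (Fin 4 → ℝ)} {a b c r : ℝ} (σ : ℝ)
    (hfr : ∀ v ∈ Metric.ball (0 : Fin 4 → ℝ) r, v ∈ frontier E → ell a b c v = 0) :
    (Metric.ball (0 : Fin 4 → ℝ) r ∩ {v | 0 < σ * ell a b c v} ⊆ E) ∨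
    (Metric.ball (0 : Fin 4 → ℝ) r ∩ {v | 0 < σ * ell a b c v} ⊆ Eᶜ) := by
  by_contra! h
  obtain ⟨h1, h2⟩ := h
  obtain ⟨v, hv, hvE⟩ := Set.not_subset.1 h1
  obtain ⟨w, hw, hwE⟩ := Set.not_subset.1 h2
  have hnf : ∀ z ∈ Metric.ball (0 : Fin 4 → ℝ) r ∩ {v | 0 < σ * ell a b c v}, z ∉ frontier E := by
    intro z hz hzf
    have := hz.2
    simp [hfr z hz.1 hzf] at this
  have hin : ∀ z ∈ Metric.ball (0 : Fin 4 → ℝ) r ∩ {v | 0 < σ * ell a b c v}, z ∈ E →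
      z ∈ interior E := by
    intro z hz hzE
    by_contra h
    exact hnf z hz ⟨subset_closure hzE, h⟩
  have hin' : ∀ z ∈ Metric.ball (0 : Fin 4 → ℝ) r ∩ {v | 0 < σ * ell a b c v}, z ∉ E →
      z ∈ interior Eᶜ := by
    intro z hz hzE
    by_contra h
    apply hnf z hz
    rw [← frontier_compl]
    exact ⟨subset_closure hzE, h⟩
  obtain ⟨z, -, hz1, hz2⟩ := (ell_convex a b c σ r).isPreconnected (interior E) (interior Eᶜ)
    isOpen_interior isOpen_interior
    (fun z hz => (Classical.em (z ∈ E)).imp (hin z hz) (hin' z hz))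
    ⟨w, hw, hin w hw (not_not.1 hwE)⟩ ⟨v, hv, hin' v hv hvE⟩
  exact interior_subset hz2 (interior_subset hz1)

lemma loc_of {E : Set (Fin 4 → ℝ)} (hE : PreciselyMonotone E)
    (h0 : (0 : Fin 4 → ℝ) ∈ frontier E) (h1 : PT 0 0 0 0 1 0 0 1 ∈ E) {a b c r : ℝ} (hr : 0 < r)
    (hfr : ∀ v ∈ Metric.ball (0 : Fin 4 → ℝ) r, v ∈ frontier E → ell a b c v = 0) :
    Loc E (Metric.ball 0 r) a b c 1 := by
  have hz : PT 0 0 0 0 1 0 0 0 = 0 := by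
    ext i
    fin_cases i <;> simp [PT]
  obtain ⟨δ, hδ, hδ1, hd, hd'⟩ := small_param (Metric.isOpen_ball (x := (0 : Fin 4 → ℝ)) (ε := r))
    _ (PT_cont 0 0 0 0 1 0 0) (by rw [hz]; exact Metric.mem_ball_self hr)
  have hop : ∀ σ : ℝ, IsOpen (Metric.ball (0 : Fin 4 → ℝ) r ∩ {v | 0 < σ * ell a b c v}) :=
    fun σ => Metric.isOpen_ball.inter
      (isOpen_lt continuous_const (continuous_const.mul (ell_cont a b c)))
  have m1 : PT 0 0 0 0 1 0 0 δ ∈ Metric.ball (0 : Fin 4 → ℝ) r ∩ {v | 0 < (1 : ℝ) * ell a b c v} :=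
    ⟨hd, by simp [PT, ell, hδ]⟩
  have m2 : PT 0 0 0 0 1 0 0 (-δ) ∈
      Metric.ball (0 : Fin 4 → ℝ) r ∩ {v | 0 < (-1 : ℝ) * ell a b c v} :=
    ⟨hd', by simp [PT, ell, hδ]⟩
  rcases side 1 hfr with hU | hU <;> rcases side (-1) hfr with hV | hV
  · exact absurd (int_mid hE.1 δ hδ (interior_maximal hU (hop _) m1)
      (interior_maximal hV (hop _) m2)) h0.2
  · exact fun v hv => ⟨fun h => hU ⟨hv, h⟩, fun h => hV ⟨hv, by simp at h ⊢; exact h⟩⟩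
  · exact absurd (conv_line hE.1 0 0 0 0 1 0 0 (-δ) δ 1 (by linarith) hδ1 (hV m2) h1) (hU m1)
  · rw [← frontier_compl] at h0
    exact absurd (int_mid hE.2 δ hδ (interior_maximal hU (hop _) m1)
      (interior_maximal hV (hop _) m2)) h0.2

/-- **Monotone `(pX+qY)`-epigraphs (global statement):** if the boundary of `E`
coincides near the origin with the plane `x = ay + bt + cu`, then it coincides with
it globally. -/
theorem monotone_epigraph_global
    (E : Set (Fin 4 → ℝ)) (hE : PreciselyMonotone E)
    (h0 : (0 : Fin 4 → ℝ) ∈ frontier E)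
    (h1 : (![1, 0, 0, 0] : Fin 4 → ℝ) ∈ interior E)
    (a b c : ℝ) (Ω : Set (Fin 4 → ℝ)) (hΩ : IsOpen Ω) (h0Ω : (0 : Fin 4 → ℝ) ∈ Ω)
    (hloc : frontier E ∩ Ω = {v : Fin 4 → ℝ | v 0 = a * v 1 + b * v 3 + c * v 2} ∩ Ω) :
    frontier E = {v : Fin 4 → ℝ | v 0 = a * v 1 + b * v 3 + c * v 2} := by
  obtain ⟨r, hr, hb⟩ := Metric.isOpen_iff.1 hΩ 0 h0Ω
  have hl : Loc E (Metric.ball 0 r) a b c 1 := by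
    refine loc_of hE h0 ?_ hr ?_
    · convert interior_subset h1 using 1
      ext i
      fin_cases i <;> simp [PT]
    · intro v hv hvf
      have : v ∈ {v : Fin 4 → ℝ | v 0 = a * v 1 + b * v 3 + c * v 2} ∩ Ω := by
        rw [← hloc]; exact ⟨hvf, hb hv⟩
      have := this.1
      simp only [Set.mem_ofPred_eq] at this
      simp only [ell]; linarith
  have hb0 : (0 : Fin 4 → ℝ) ∈ Metric.ball (0 : Fin 4 → ℝ) r := Metric.mem_ball_self hr
  have hU : ∀ v, 0 < ell a b c v → v ∈ E := fun v hv =>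
    step3 hE Metric.isOpen_ball hb0 hl v (by linarith)
  have hV : ∀ v, ell a b c v < 0 → v ∈ Eᶜ := fun v hv =>
    step3 (pm_compl hE) Metric.isOpen_ball hb0 hl.compl v (by linarith)
  have oU : IsOpen {v | 0 < ell a b c v} := isOpen_lt continuous_const (ell_cont a b c)
  have oV : IsOpen {v | ell a b c v < 0} := isOpen_lt (ell_cont a b c) continuous_const
  ext v
  simp only [Set.mem_ofPred_eq]
  constructor
  · intro hv
    rcases lt_trichotomy (ell a b c v) 0 with h | h | h
    · rw [← frontier_compl] at hv
      exact absurd (interior_maximal (s := Eᶜ) (t := {v | ell a b c v < 0}) hV oV h) hv.2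
    · simp only [ell] at h; linarith
    · exact absurd (interior_maximal (s := E) (t := {v | 0 < ell a b c v}) hU oU h) hv.2
  · intro hv
    have hve : ell a b c v = 0 := by simp only [ell]; linarith
    let f : ℝ → (Fin 4 → ℝ) := fun s => ![v 0 + s, v 1, v 2, v 3]
    have hf : Continuous f := by
      refine continuous_pi fun i => ?_
      fin_cases i <;> simp [f] <;> fun_prop
    have hf0 : f 0 = v := by
      ext i
      fin_cases i <;> simp [f]
    have hfe : ∀ s, ell a b c (f s) = s := by
      intro s
      simp only [ell] at hve
      simp [ell, f]
      linarith
    rw [frontier_eq_closure_inter_closure]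
    constructor
    · rw [mem_closure_iff]
      intro o ho hvo
      obtain ⟨δ, hδ, -, hd, -⟩ := small_param ho f hf (by rwa [hf0])
      exact ⟨f δ, hd, hU _ (by rwa [hfe])⟩
    · rw [mem_closure_iff]
      intro o ho hvo
      obtain ⟨δ, hδ, -, -, hd⟩ := small_param ho f hf (by rwa [hf0])
      exact ⟨f (-δ), hd, hV _ (by rw [hfe]; linarith)⟩
end
end

section
/- Let E ⊆ ℝ⁴ = ℍ×ℝ be precisely monotone. Assume the origin (0,0,0,0) ∈ ∂E and (0,0,1,0) ∈ Int(E). Then there exist an open neighborhood W of the origin in ℝ³ and a linear function ψ : ℝ³ → ℝ (so ψ(0,0,0) = 0) such that: (i) {(x,y,ψ(x,y,t),t) : (x,y,t) ∈ W} ⊆ ∂E; (ii) {(x,y,u,t) : (x,y,t) ∈ W and u > ψ(x,y,t)} ⊆ Int(E); (iii) {(x,y,u,t) : (x,y,t) ∈ W and u < ψ(x,y,t)} ⊆ Int(ℝ⁴∖E). -/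
/- The group `ℍ×ℝ`: `ℝ⁴` with coordinates `(x,y,u,t)` and law
`(x,y,u,t)·(x',y',u',t') = (x+x', y+y', u+u', t+t'+2(yx'−y'x))`. -/

noncomputable section

/-- Affine along horizontal segments in a box of the Heisenberg group. -/
def HAff (f : ℝ → ℝ → ℝ → ℝ) (r : ℝ) : Prop :=
  ∀ x0 y0 t0 x1 y1 t1 s X Y T : ℝ, |x0| < r → |y0| < r → |t0| < r → |x1| < r → |y1| < r →
    |t1| < r → t1 - t0 = 2 * (y0 * x1 - y1 * x0) → 0 ≤ s → s ≤ 1 →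
    X = (1 - s) * x0 + s * x1 → Y = (1 - s) * y0 + s * y1 → T = (1 - s) * t0 + s * t1 →
    f X Y T = (1 - s) * f x0 y0 t0 + s * f x1 y1 t1

theorem HAff.odd {f : ℝ → ℝ → ℝ → ℝ} {r : ℝ} (H : HAff f r) {x y t : ℝ}
    (hx : |x| < r) (hy : |y| < r) (ht : |t| < r) :
    f x y t + f (-x) (-y) t = 2 * f 0 0 t := by
  have := H x y t (-x) (-y) t (1/2) 0 0 t hx hy ht (by rwa [abs_neg]) (by rwa [abs_neg]) ht
    (by ring) (by norm_num) (by norm_num) (by ring) (by ring) (by ring)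
  linarith

theorem HAff.homog {f : ℝ → ℝ → ℝ → ℝ} {r : ℝ} (hr : 0 < r) (H : HAff f r)
    (h0 : ∀ t, |t| < r → f 0 0 t = 0) {x y t l : ℝ}
    (hx : |x| < r) (hy : |y| < r) (ht : |t| < r) (hl : |l| ≤ 1) :
    f (l * x) (l * y) t = l * f x y t := by
  have key : ∀ x y l : ℝ, |x| < r → |y| < r → 0 ≤ l → l ≤ 1 → f (l * x) (l * y) t = l * f x y t := by
    intro x y l hx hy h1 h2
    have := H 0 0 t x y t l (l * x) (l * y) t (by simpa using hr) (by simpa using hr) ht hx hy ht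
      (by ring) h1 h2 (by ring) (by ring) (by ring)
    rw [this, h0 t ht]; ring
  have hl' := abs_le.1 hl
  rcases le_total 0 l with h | h
  · exact key x y l hx hy h hl'.2
  · have h1 := key (-x) (-y) (-l) (by rwa [abs_neg]) (by rwa [abs_neg]) (by linarith) (by linarith)
    have h2 := H.odd hx hy ht
    rw [h0 t ht] at h2
    have e1 : -l * -x = l * x := by ring
    have e2 : -l * -y = l * y := by ring
    rw [e1, e2] at h1
    rw [h1]
    have : f (-x) (-y) t = - f x y t := by linarith
    rw [this]; ring

theorem HAff.axis {f : ℝ → ℝ → ℝ → ℝ} {r : ℝ} (hr : 0 < r) (hr1 : r ≤ 1) (H : HAff f r) :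
    ∃ c d : ℝ, ∀ t, |t| < r ^ 2 / 8 → f 0 0 t = c * t + d := by
  set ρ := r ^ 2 / 8 with hρ
  have hρ0 : 0 < ρ := by positivity
  have hρr : ρ < r := by nlinarith
  have hseg : ∀ s T : ℝ, 0 ≤ s → s ≤ 1 → T = (1 - s) * (-ρ) + s * ρ →
      f 0 0 T = (1 - s) * f 0 0 (-ρ) + s * f 0 0 ρ := by
    intro s T h1 h2 hT
    have hr2 : |r / 2| < r := by rw [abs_of_pos (by linarith)]; linarith
    have hr4 : |-(r / 4)| < r := by rw [abs_neg, abs_of_pos (by linarith)]; linarith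
    have hz : |(0 : ℝ)| < r := by simpa using hr
    have hp : |ρ| < r := by rwa [abs_of_pos hρ0]
    have hn : |-ρ| < r := by rwa [abs_neg]
    have hTr : |T| < r := by
      rw [abs_lt]; constructor <;> nlinarith
    have hX : |(1 - s) * (r / 2)| < r := by rw [abs_lt]; constructor <;> nlinarith
    have hY : |s * (-(r / 4))| < r := by rw [abs_lt]; constructor <;> nlinarith
    have a1 := H (r / 2) 0 (-ρ) 0 (-(r / 4)) ρ s ((1 - s) * (r / 2)) (s * (-(r / 4))) T
      hr2 hz hn hz hr4 hp (by rw [hρ]; ring) h1 h2 (by ring) (by ring) hT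
    have a2 := H (-(r / 2)) (-0) (-ρ) (-0) (-(-(r / 4))) ρ s (-((1 - s) * (r / 2)))
      (-(s * (-(r / 4)))) T
      (by rwa [abs_neg]) (by rwa [abs_neg]) hn (by rwa [abs_neg]) (by rwa [abs_neg]) hp
      (by rw [hρ]; ring) h1 h2 (by ring) (by ring) hT
    have o1 := H.odd hX hY hTr
    have o2 := H.odd hr2 hz hn
    have o3 := H.odd hz hr4 hp
    have : 2 * f 0 0 T = (1 - s) * (2 * f 0 0 (-ρ)) + s * (2 * f 0 0 ρ) := by
      rw [← o1, ← o2, ← o3, a1, a2]; ring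
    linarith
  refine ⟨(f 0 0 ρ - f 0 0 (-ρ)) / (2 * ρ), (f 0 0 ρ + f 0 0 (-ρ)) / 2, fun t ht => ?_⟩
  have ht' := abs_lt.1 ht
  rw [hseg ((t + ρ) / (2 * ρ)) t (div_nonneg (by linarith) (by linarith))
    ((div_le_one (by linarith)).2 (by linarith)) (by field_simp; ring)]
  field_simp
  ring

theorem lattice_const {p q m n : ℝ → ℝ} {R K σ : ℝ} (hσ : 0 < σ) (h1 : 40 * σ ≤ R) (h2 : 10 * σ ≤ K)
    (hm : ∀ t κ, 0 < κ → κ ≤ K → |t + κ| < R → |t - κ| < R → |t| < R →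
      m t = p (t + κ) + q (t - κ))
    (hn : ∀ t κ, 0 < κ → κ ≤ K → |t + κ| < R → |t - κ| < R → |t| < R →
      n t = p (t - κ) - q (t + κ)) :
    ∀ t h, |t| < σ → 0 < h → h < 2 * σ → p (t + h) = p t ∧ q (t + h) = q t := by
  have dA : ∀ t h i, 0 < h → h < 2 * σ → |t| < 20 * σ → (1 ≤ i ∧ i ≤ (3:ℝ)) →
      p (t + h) - p t = q (t - (2 * i) * h) - q (t - (2 * i + 1) * h) := by
    intro t h i h0 hh ht hi
    have ht' := abs_lt.1 ht
    have e1 := hm (t - i * h) (i * h) (by nlinarith) (by nlinarith)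
      (by rw [abs_lt]; constructor <;> nlinarith) (by rw [abs_lt]; constructor <;> nlinarith)
      (by rw [abs_lt]; constructor <;> nlinarith)
    have e2 := hm (t - i * h) ((i + 1) * h) (by nlinarith) (by nlinarith)
      (by rw [abs_lt]; constructor <;> nlinarith) (by rw [abs_lt]; constructor <;> nlinarith)
      (by rw [abs_lt]; constructor <;> nlinarith)
    rw [e1] at e2
    ring_nf at e2 ⊢
    linarith
  have dB : ∀ t h i, 0 < h → h < 2 * σ → |t| < 20 * σ → (1 ≤ i ∧ i ≤ (3:ℝ)) →
      p (t + h) - p t = q (t + (2 * i + 1) * h) - q (t + (2 * i + 2) * h) := by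
    intro t h i h0 hh ht hi
    have ht' := abs_lt.1 ht
    have e1 := hn (t + (i + 1) * h) (i * h) (by nlinarith) (by nlinarith)
      (by rw [abs_lt]; constructor <;> nlinarith) (by rw [abs_lt]; constructor <;> nlinarith)
      (by rw [abs_lt]; constructor <;> nlinarith)
    have e2 := hn (t + (i + 1) * h) ((i + 1) * h) (by nlinarith) (by nlinarith)
      (by rw [abs_lt]; constructor <;> nlinarith) (by rw [abs_lt]; constructor <;> nlinarith)
      (by rw [abs_lt]; constructor <;> nlinarith)
    rw [e1] at e2
    ring_nf at e2 ⊢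
    linarith
  have P : ∀ t h, |t| < 8 * σ → 0 < h → h < 2 * σ → p (t + h) = p t := by
    intro t h ht h0 hh
    have ht' := abs_lt.1 ht
    have a0 := dA t h 1 h0 hh (by linarith) (by norm_num)
    have a1 := dA (t + 2 * h) h 1 h0 hh (by rw [abs_lt]; constructor <;> linarith) (by norm_num)
    have a2 := dA (t + 2 * h) h 2 h0 hh (by rw [abs_lt]; constructor <;> linarith) (by norm_num)
    have a3 := dA (t + 4 * h) h 1 h0 hh (by rw [abs_lt]; constructor <;> linarith) (by norm_num)
    have a4 := dA (t + 4 * h) h 2 h0 hh (by rw [abs_lt]; constructor <;> linarith) (by norm_num)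
    have a5 := dA (t + 6 * h) h 1 h0 hh (by rw [abs_lt]; constructor <;> linarith) (by norm_num)
    have a6 := dA (t + 6 * h) h 2 h0 hh (by rw [abs_lt]; constructor <;> linarith) (by norm_num)
    have b := dB t h 1 h0 hh (by linarith) (by norm_num)
    ring_nf at a0 a1 a2 a3 a4 a5 a6 b ⊢
    linarith
  intro t h ht h0 hh
  have ht' := abs_lt.1 ht
  refine ⟨P t h (by linarith) h0 hh, ?_⟩
  have a0 := dA (t + 3 * h) h 1 h0 hh (by rw [abs_lt]; constructor <;> linarith) (by norm_num)
  have a1 := P (t + 3 * h) h (by rw [abs_lt]; constructor <;> linarith) h0 hh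
  rw [a1] at a0
  ring_nf at a0 ⊢
  linarith

theorem HAff.linear0 {f : ℝ → ℝ → ℝ → ℝ} {R : ℝ} (hR : 0 < R) (hR1 : R ≤ 1) (H : HAff f R)
    (h0 : ∀ t, |t| < R → f 0 0 t = 0) :
    ∃ ρ > 0, ∃ a b : ℝ, ∀ x y t, |x| < ρ → |y| < ρ → |t| < ρ → f x y t = a * x + b * y := by
  set k := R / 2 with hk
  have hk0 : 0 < k := by positivity
  have hkR : |k| < R := by rw [abs_of_pos hk0]; linarith
  have hz : |(0 : ℝ)| < R := by simpa using hR
  have hnk : |-k| < R := by rwa [abs_neg]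
  set σ := R ^ 2 / 40 with hσ
  have hσ0 : 0 < σ := by positivity
  have hσR : 40 * σ ≤ R := by nlinarith
  have key := lattice_const (p := fun t => f k 0 t) (q := fun t => f 0 k t)
    (m := fun t => f k k t) (n := fun t => f k (-k) t) (R := R) (K := k ^ 2) hσ0 hσR
    (by rw [hσ, hk]; nlinarith)
    (by
      intro t κ hκ hκ2 hp hn ht
      obtain ⟨l, hl0, hl1, hl⟩ : ∃ l : ℝ, 0 < l ∧ l ≤ 1 ∧ l ^ 2 * k ^ 2 = κ := by
        refine ⟨√κ / k, by positivity, ?_, ?_⟩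
        · rw [div_le_one hk0]; exact Real.sqrt_le_iff.2 ⟨hk0.le, hκ2⟩
        · rw [div_pow, Real.sq_sqrt hκ.le]; field_simp
      have hl' : |l| ≤ 1 := by rwa [abs_of_pos hl0]
      have hlk : |l * k| < R := by rw [abs_mul]; nlinarith [abs_nonneg k]
      have a0 := H (l * k) 0 (t + κ) 0 (l * k) (t - κ) (1/2) ((l / 2) * k) ((l / 2) * k) t
        hlk hz hp hz hlk hn (by rw [← hl]; ring) (by norm_num) (by norm_num) (by ring) (by ring)
        (by ring)
      have a1 := H.homog hR h0 hkR hkR ht (l := l / 2) (by rw [abs_le]; constructor <;> linarith)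
      have a2 := H.homog hR h0 hkR hz hp hl'
      have a3 := H.homog hR h0 hz hkR hn hl'
      rw [mul_zero] at a2 a3
      rw [a1, a2, a3] at a0
      apply mul_left_cancel₀ hl0.ne'
      linarith)
    (by
      intro t κ hκ hκ2 hp hn ht
      obtain ⟨l, hl0, hl1, hl⟩ : ∃ l : ℝ, 0 < l ∧ l ≤ 1 ∧ l ^ 2 * k ^ 2 = κ := by
        refine ⟨√κ / k, by positivity, ?_, ?_⟩
        · rw [div_le_one hk0]; exact Real.sqrt_le_iff.2 ⟨hk0.le, hκ2⟩
        · rw [div_pow, Real.sq_sqrt hκ.le]; field_simp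
      have hl' : |l| ≤ 1 := by rwa [abs_of_pos hl0]
      have hlk : |l * k| < R := by rw [abs_mul]; nlinarith [abs_nonneg k]
      have hlk' : |-l * k| < R := by rwa [neg_mul, abs_neg]
      have a0 := H (l * k) 0 (t - κ) 0 (-l * k) (t + κ) (1/2) ((l / 2) * k) ((l / 2) * (-k)) t
        hlk hz hn hz hlk' hp (by rw [← hl]; ring) (by norm_num) (by norm_num) (by ring) (by ring)
        (by ring)
      have a1 := H.homog hR h0 hkR hnk ht (l := l / 2) (by rw [abs_le]; constructor <;> linarith)
      have a2 := H.homog hR h0 hkR hz hn hl'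
      have a3 := H.homog hR h0 hz hkR hp (l := -l) (by rwa [abs_neg])
      rw [mul_zero] at a2 a3
      rw [a1, a2, a3] at a0
      apply mul_left_cancel₀ hl0.ne'
      linarith)
  have cst : ∀ t, |t| < σ → f k 0 t = f k 0 0 ∧ f 0 k t = f 0 k 0 := by
    intro t ht
    have ht' := abs_lt.1 ht
    rcases lt_trichotomy t 0 with h | h | h
    · have := key t (-t) ht (by linarith) (by linarith)
      simp only [add_neg_cancel] at this
      exact ⟨this.1.symm, this.2.symm⟩
    · rw [h]; exact ⟨rfl, rfl⟩
    · have := key 0 t (by simpa using hσ0) h (by linarith)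
      simpa using this
  refine ⟨σ / 4, by linarith, f k 0 0 / k, f 0 k 0 / k, fun x y t hx hy ht => ?_⟩
  have hxy : |x * y| < σ / 16 := by
    rw [abs_mul]; nlinarith [abs_nonneg x, abs_nonneg y]
  have hx' := abs_lt.1 hx
  have hy' := abs_lt.1 hy
  have ht' := abs_lt.1 ht
  have hxy' := abs_lt.1 hxy
  have b0 : |t + 4 * (x * y)| < σ := by rw [abs_lt]; constructor <;> linarith
  have b1 : |t - 4 * (x * y)| < σ := by rw [abs_lt]; constructor <;> linarith
  have a0 := H (2 * x) 0 (t + 4 * (x * y)) 0 (2 * y) (t - 4 * (x * y)) (1/2) x y t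
    (by rw [abs_lt]; constructor <;> linarith) hz (by linarith) hz
    (by rw [abs_lt]; constructor <;> linarith) (by linarith) (by ring) (by norm_num) (by norm_num)
    (by ring) (by ring) (by ring)
  have a1 := H.homog hR h0 hkR hz (t := t + 4 * (x * y)) (l := 2 * x / k) (by linarith)
    (by rw [abs_div, abs_of_pos hk0, div_le_one hk0, abs_le]; constructor <;> linarith)
  have a2 := H.homog hR h0 hz hkR (t := t - 4 * (x * y)) (l := 2 * y / k) (by linarith)
    (by rw [abs_div, abs_of_pos hk0, div_le_one hk0, abs_le]; constructor <;> linarith)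
  rw [mul_zero, div_mul_cancel₀ _ hk0.ne', (cst _ b0).1] at a1
  rw [mul_zero, div_mul_cancel₀ _ hk0.ne', (cst _ b1).2] at a2
  rw [a0, a1, a2]
  ring

theorem HAff.affine {f : ℝ → ℝ → ℝ → ℝ} {r : ℝ} (hr : 0 < r) (hr1 : r ≤ 1) (H : HAff f r) :
    ∃ ρ > 0, ∃ a b c d : ℝ, ∀ x y t, |x| < ρ → |y| < ρ → |t| < ρ →
      f x y t = a * x + b * y + c * t + d := by
  obtain ⟨c, d, hcd⟩ := H.axis hr hr1
  have hle : r ^ 2 / 8 ≤ r := by nlinarith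
  obtain ⟨ρ, hρ, a, b, hab⟩ := HAff.linear0 (f := fun x y t => f x y t - (c * t + d))
    (R := r ^ 2 / 8) (by positivity) (by linarith)
    (by
      intro x0 y0 t0 x1 y1 t1 s X Y T i1 i2 i3 i4 i5 i6 e s0 s1 e1 e2 e3
      have := H x0 y0 t0 x1 y1 t1 s X Y T (by linarith) (by linarith) (by linarith)
        (by linarith) (by linarith) (by linarith) e s0 s1 e1 e2 e3
      simp only [this]
      rw [e3]
      ring)
    (by intro t ht; simp only [hcd t ht]; ring)
  refine ⟨ρ, hρ, a, b, c, d, fun x y t hx hy ht => ?_⟩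
  have := hab x y t hx hy ht
  linarith

theorem HRConvex.coord {C : Set (Fin 4 → ℝ)} (hC : HRConvex C)
    {x0 y0 u0 t0 x1 y1 u1 t1 s X Y U T : ℝ}
    (h0 : (![x0, y0, u0, t0] : Fin 4 → ℝ) ∈ C) (h1 : (![x1, y1, u1, t1] : Fin 4 → ℝ) ∈ C)
    (e : t1 - t0 = 2 * (y0 * x1 - y1 * x0)) (hs0 : 0 ≤ s) (hs1 : s ≤ 1)
    (eX : X = (1 - s) * x0 + s * x1) (eY : Y = (1 - s) * y0 + s * y1)
    (eU : U = (1 - s) * u0 + s * u1) (eT : T = (1 - s) * t0 + s * t1) :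
    (![X, Y, U, T] : Fin 4 → ℝ) ∈ C := by
  have e1 : (![x1, y1, u1, t1] : Fin 4 → ℝ) =
      hmul ![x0, y0, u0, t0] ![x1 - x0, y1 - y0, u1 - u0, 0] := by
    have : t1 = t0 + 2 * (y0 * x1 - y1 * x0) := by linarith
    ext i; fin_cases i <;> simp [hmul]
    rw [this]; ring
  rw [e1] at h1
  have h2 := hC _ h0 _ _ _ h1 s hs0 hs1
  convert h2 using 1
  have : t1 = t0 + 2 * (y0 * x1 - y1 * x0) := by linarith
  subst this eX eY eU eT
  ext i; fin_cases i <;> simp [hmul] <;> ring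

/-- Step lemma: points of the complement near the origin propagate downwards. -/
theorem step_down {E : Set (Fin 4 → ℝ)} (hE : HRConvex E) {δ η : ℝ} (hδ1 : δ ≤ 1)
    (hη : 0 < η) (hηδ : 100 * η ≤ δ)
    (hN : ∀ x y t : ℝ, |x| < δ → |y| < δ → |t| < δ → (![x, y, 1, t] : Fin 4 → ℝ) ∈ E)
    {x y u t A B : ℝ} (hx : |x| < η) (hy : |y| < η) (ht : |t| < η) (hu : -6 < u) (hu1 : u < 1 / 2)
    (hA : |A| < η) (hB : |B| < η) (hp : (![x, y, u, t] : Fin 4 → ℝ) ∉ E)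
    {X Y T : ℝ} (eX : X = x + A) (eY : Y = y + B) (eT : T = t + 2 * (y * A - B * x)) :
    (![X, Y, u - 1, T] : Fin 4 → ℝ) ∉ E := by
  intro hq
  apply hp
  have hyA : |y * A| < η := by rw [abs_mul]; nlinarith [abs_nonneg y, abs_nonneg A]
  have hBx : |B * x| < η := by rw [abs_mul]; nlinarith [abs_nonneg B, abs_nonneg x]
  rw [abs_lt] at hx hy ht hA hB hyA hBx
  have hq2 := hN (x - (1 - u) * A) (y - (1 - u) * B) (t - 2 * (1 - u) * (y * A - B * x))
    (by rw [abs_lt]; constructor <;> nlinarith) (by rw [abs_lt]; constructor <;> nlinarith)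
    (by rw [abs_lt]; constructor <;> nlinarith)
  have h2 : (2 - u) ≠ 0 := by linarith
  refine hE.coord hq hq2 (s := 1 / (2 - u)) ?_ (by apply one_div_nonneg.2; linarith)
    (by rw [div_le_one] <;> linarith) ?_ ?_ ?_ ?_
  · subst eX eY eT; ring
  · subst eX; field_simp; ring
  · subst eY; field_simp; ring
  · field_simp; ring
  · subst eT; field_simp; ring

theorem exists_below {E : Set (Fin 4 → ℝ)} (hE : HRConvex E) {δ : ℝ} (hδ : 0 < δ) (hδ1 : δ ≤ 1)
    (hN : ∀ x y t : ℝ, |x| < δ → |y| < δ → |t| < δ → (![x, y, 1, t] : Fin 4 → ℝ) ∈ E)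
    (hF : ∀ ε > 0, ∃ x y u t : ℝ, |x| < ε ∧ |y| < ε ∧ |u| < ε ∧ |t| < ε ∧
      (![x, y, u, t] : Fin 4 → ℝ) ∉ E) :
    ∃ r > 0, r ≤ δ ∧ ∀ x y t : ℝ, |x| < r → |y| < r → |t| < r →
      ∃ u < 1, (![x, y, u, t] : Fin 4 → ℝ) ∉ E := by
  set η := δ / 100 with hη
  have hη0 : 0 < η := by positivity
  have hη1 : η ≤ 1 / 100 := by linarith
  have hr : η ^ 2 / 4 < η := by nlinarith
  refine ⟨η ^ 2 / 4, by positivity, by linarith, fun x y t hx hy ht => ?_⟩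
  obtain ⟨a, b, u, c, ha, hb, hu, hc, hp⟩ := hF (η ^ 2 / 4) (by positivity)
  have hz : |(0 : ℝ)| < η := by simpa using hη0
  have hk : |η / 2| < η := by rw [abs_of_pos] <;> linarith
  have hm : |(c - t) / η| < η := by
    rw [abs_div, abs_of_pos hη0, div_lt_iff₀ hη0]
    rw [abs_lt] at hc ht ⊢
    constructor <;> nlinarith
  have ha' : |-a| < η := by rw [abs_neg]; linarith
  have hb' : |-b| < η := by rw [abs_neg]; linarith
  have hu' := abs_lt.1 hu
  have st := @step_down E hE δ η hδ1 hη0 (by linarith) hN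
  have s1 := st (X := 0) (Y := 0) (T := c) (by linarith : |a| < η) (by linarith : |b| < η)
    (by linarith : |c| < η)
    (by linarith) (by linarith) ha' hb' hp (by ring) (by ring) (by ring)
  have s2 := st (X := η / 2) (Y := 0) (T := c) hz hz (by linarith : |c| < η)
    (by linarith) (by linarith) hk hz s1 (by ring) (by ring) (by ring)
  have s3 := st (X := η / 2) (Y := (c - t) / η) (T := t) hk hz (by linarith : |c| < η)
    (by linarith) (by linarith) hz hm s2 (by ring) (by ring) (by field_simp; ring)
  have s4 := st (X := 0) (Y := 0) (T := t) hk hm (by linarith : |t| < η)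
    (by linarith) (by linarith) (A := -(η / 2)) (B := -((c - t) / η)) (by rwa [abs_neg])
    (by rwa [abs_neg]) s3 (by ring) (by ring) (by ring)
  have s5 := st (X := x) (Y := y) (T := t) hz hz (by linarith : |t| < η)
    (by linarith) (by linarith) (by linarith : |x| < η) (by linarith : |y| < η) s4
    (by ring) (by ring) (by ring)
  exact ⟨_, by linarith, s5⟩

theorem exists_height {E : Set (Fin 4 → ℝ)} (hE : PreciselyMonotone E) {x y t u0 : ℝ}
    (h1 : (![x, y, 1, t] : Fin 4 → ℝ) ∈ E) (hu : u0 < 1) (h0 : (![x, y, u0, t] : Fin 4 → ℝ) ∉ E) :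
    ∃ v : ℝ, (∀ u, v < u → (![x, y, u, t] : Fin 4 → ℝ) ∈ E) ∧
      (∀ u, u < v → (![x, y, u, t] : Fin 4 → ℝ) ∉ E) := by
  have vert : ∀ C, HRConvex C → ∀ a b m : ℝ, a ≤ m → m ≤ b → (![x, y, a, t] : Fin 4 → ℝ) ∈ C →
      (![x, y, b, t] : Fin 4 → ℝ) ∈ C → (![x, y, m, t] : Fin 4 → ℝ) ∈ C := by
    intro C hC a b m h1 h2 ha hb
    rcases eq_or_lt_of_le (h1.trans h2) with h | h
    · have : m = a := by linarith
      rwa [this]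
    · have h' : b - a ≠ 0 := by linarith
      refine hC.coord ha hb (s := (m - a) / (b - a)) (by ring)
        (div_nonneg (by linarith) (by linarith))
        ((div_le_one (by linarith)).2 (by linarith)) (by ring) (by ring) ?_ (by ring)
      field_simp; ring
  set S := {u : ℝ | (![x, y, u, t] : Fin 4 → ℝ) ∈ E} with hS
  have hb : ∀ w ∈ S, u0 ≤ w := by
    intro w hw
    by_contra hlt
    exact h0 (vert E hE.1 w 1 u0 (by linarith) hu.le hw h1)
  refine ⟨sInf S, fun u hu => ?_, fun u hu hmem => ?_⟩
  · obtain ⟨w, hw, hwu⟩ := exists_lt_of_csInf_lt ⟨1, h1⟩ hu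
    by_contra hn
    exact vert Eᶜ hE.2 u0 u w (hb w hw) hwu.le h0 hn hw
  · exact absurd (csInf_le ⟨u0, hb⟩ hmem) (not_le.2 hu)

theorem height_haff {E : Set (Fin 4 → ℝ)} (hE : PreciselyMonotone E) {r : ℝ}
    {f : ℝ → ℝ → ℝ → ℝ}
    (h1 : ∀ x y t, |x| < r → |y| < r → |t| < r → ∀ u, f x y t < u →
      (![x, y, u, t] : Fin 4 → ℝ) ∈ E)
    (h2 : ∀ x y t, |x| < r → |y| < r → |t| < r → ∀ u, u < f x y t →
      (![x, y, u, t] : Fin 4 → ℝ) ∉ E) : HAff f r := by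
  intro x0 y0 t0 x1 y1 t1 s X Y T i1 i2 i3 i4 i5 i6 e s0 s1 e1 e2 e3
  have bd : ∀ a b : ℝ, |a| < r → |b| < r → |(1 - s) * a + s * b| < r := by
    intro a b ha hb
    rw [abs_lt] at ha hb ⊢
    have := convex_Ioo (-r) r ha hb (by linarith : 0 ≤ 1 - s) s0 (by ring)
    simpa using this
  have iX : |X| < r := e1 ▸ bd _ _ i1 i4
  have iY : |Y| < r := e2 ▸ bd _ _ i2 i5
  have iT : |T| < r := e3 ▸ bd _ _ i3 i6
  apply le_antisymm
  · apply le_of_forall_pos_le_add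
    intro ε hε
    by_contra hlt
    refine h2 X Y T iX iY iT _ (not_le.1 hlt) ?_
    exact hE.1.coord (h1 x0 y0 t0 i1 i2 i3 (f x0 y0 t0 + ε) (by linarith))
      (h1 x1 y1 t1 i4 i5 i6 (f x1 y1 t1 + ε) (by linarith)) e s0 s1 e1 e2 (by ring) e3
  · apply le_of_forall_pos_le_add
    intro ε hε
    by_contra hlt
    refine absurd (h1 X Y T iX iY iT ((1 - s) * f x0 y0 t0 + s * f x1 y1 t1 - ε) (by linarith)) ?_
    exact hE.2.coord (h2 x0 y0 t0 i1 i2 i3 (f x0 y0 t0 - ε) (by linarith))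
      (h2 x1 y1 t1 i4 i5 i6 (f x1 y1 t1 - ε) (by linarith)) e s0 s1 e1 e2 (by ring) e3

/-- **Monotone `U`-epigraphs (local statement):** near the origin the boundary of `E`
is the graph of a linear function `ψ(x,y,t)` in the `u`-direction, with the epigraph
in `Int(E)` and the ipograph in `Int(Eᶜ)`. -/
theorem monotone_U_epigraph_local
    (E : Set (Fin 4 → ℝ)) (hE : PreciselyMonotone E)
    (h0 : (0 : Fin 4 → ℝ) ∈ frontier E)
    (h1 : (![0, 0, 1, 0] : Fin 4 → ℝ) ∈ interior E) :
    ∃ W : Set (Fin 3 → ℝ), IsOpen W ∧ (0 : Fin 3 → ℝ) ∈ W ∧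
      ∃ ψ : (Fin 3 → ℝ) →ₗ[ℝ] ℝ,
        (∀ w ∈ W, (![w 0, w 1, ψ w, w 2] : Fin 4 → ℝ) ∈ frontier E) ∧
        (∀ w ∈ W, ∀ u : ℝ, ψ w < u → (![w 0, w 1, u, w 2] : Fin 4 → ℝ) ∈ interior E) ∧
        (∀ w ∈ W, ∀ u : ℝ, u < ψ w → (![w 0, w 1, u, w 2] : Fin 4 → ℝ) ∈ interior Eᶜ) := by
  obtain ⟨δ, hδ, hδ1, hN⟩ : ∃ δ > 0, δ ≤ 1 ∧ ∀ x y t : ℝ, |x| < δ → |y| < δ → |t| < δ →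
      (![x, y, 1, t] : Fin 4 → ℝ) ∈ E := by
    obtain ⟨δ, hδ, hb⟩ := Metric.isOpen_iff.1 isOpen_interior _ h1
    refine ⟨min δ 1, by positivity, min_le_right _ _, fun x y t hx hy ht => ?_⟩
    apply interior_subset
    apply hb
    rw [Metric.mem_ball, dist_pi_lt_iff hδ]
    intro i
    have := min_le_left δ 1
    fin_cases i <;> simp [Real.dist_eq] <;> linarith
  have hF : ∀ ε > 0, ∃ x y u t : ℝ, |x| < ε ∧ |y| < ε ∧ |u| < ε ∧ |t| < ε ∧
      (![x, y, u, t] : Fin 4 → ℝ) ∉ E := by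
    intro ε hε
    rw [frontier_eq_closure_inter_closure] at h0
    obtain ⟨p, hp, hd⟩ := Metric.mem_closure_iff.1 h0.2 ε hε
    rw [dist_pi_lt_iff hε] at hd
    have hd' : ∀ i, |p i| < ε := by
      intro i
      simpa [Real.dist_eq] using hd i
    refine ⟨p 0, p 1, p 2, p 3, hd' 0, hd' 1, hd' 2, hd' 3, ?_⟩
    have : (![p 0, p 1, p 2, p 3] : Fin 4 → ℝ) = p := by
      ext i; fin_cases i <;> rfl
    rwa [this]
  obtain ⟨r, hr, hrδ, hB⟩ := exists_below hE.1 hδ hδ1 hN hF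
  have hex : ∀ x y t : ℝ, ∃ v : ℝ, |x| < r → |y| < r → |t| < r →
      (∀ u, v < u → (![x, y, u, t] : Fin 4 → ℝ) ∈ E) ∧
      (∀ u, u < v → (![x, y, u, t] : Fin 4 → ℝ) ∉ E) := by
    intro x y t
    by_cases h : |x| < r ∧ |y| < r ∧ |t| < r
    · obtain ⟨u0, hu0, hn⟩ := hB x y t h.1 h.2.1 h.2.2
      obtain ⟨v, hv⟩ := exists_height hE
        (hN x y t (by linarith [h.1]) (by linarith [h.2.1]) (by linarith [h.2.2])) hu0 hn
      exact ⟨v, fun _ _ _ => hv⟩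
    · exact ⟨0, fun a b c => absurd ⟨a, b, c⟩ h⟩
  choose f hf using hex
  have haff : HAff f r := height_haff hE (fun x y t a b c => (hf x y t a b c).1)
    (fun x y t a b c => (hf x y t a b c).2)
  obtain ⟨ρ₀, hρ₀, a, b, c, d, hlin₀⟩ := haff.affine hr (by linarith)
  obtain ⟨ρ, hρ, hρ1, hρr⟩ : ∃ ρ > 0, ρ ≤ ρ₀ ∧ ρ ≤ r :=
    ⟨min ρ₀ r, lt_min hρ₀ hr, min_le_left _ _, min_le_right _ _⟩
  have hO : IsOpen {p : Fin 4 → ℝ | |p 0| < ρ ∧ |p 1| < ρ ∧ |p 3| < ρ} := by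
    apply IsOpen.and
    · exact isOpen_lt (by fun_prop) (by fun_prop)
    · apply IsOpen.and <;> exact isOpen_lt (by fun_prop) (by fun_prop)
  have eta : ∀ p : Fin 4 → ℝ, (![p 0, p 1, p 2, p 3] : Fin 4 → ℝ) = p := by
    intro p; ext i; fin_cases i <;> rfl
  have up : {p : Fin 4 → ℝ | (|p 0| < ρ ∧ |p 1| < ρ ∧ |p 3| < ρ) ∧
      a * p 0 + b * p 1 + c * p 3 + d < p 2} ⊆ interior E := by
    apply interior_maximal
    · rintro p ⟨⟨p0, p1, p3⟩, hp⟩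
      rw [← hlin₀ _ _ _ (by linarith) (by linarith) (by linarith)] at hp
      have := (hf _ _ _ (by linarith) (by linarith) (by linarith)).1 _ hp
      rwa [eta] at this
    · refine IsOpen.and hO ?_
      exact isOpen_lt (by fun_prop) (by fun_prop)
  have dn : {p : Fin 4 → ℝ | (|p 0| < ρ ∧ |p 1| < ρ ∧ |p 3| < ρ) ∧
      p 2 < a * p 0 + b * p 1 + c * p 3 + d} ⊆ interior Eᶜ := by
    apply interior_maximal
    · rintro p ⟨⟨p0, p1, p3⟩, hp⟩
      rw [← hlin₀ _ _ _ (by linarith) (by linarith) (by linarith)] at hp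
      have := (hf _ _ _ (by linarith) (by linarith) (by linarith)).2 _ hp
      rwa [eta] at this
    · refine IsOpen.and hO ?_
      exact isOpen_lt (by fun_prop) (by fun_prop)
  have hd : d = 0 := by
    rw [frontier_eq_closure_inter_closure] at h0
    rcases lt_trichotomy d 0 with h | h | h
    · exfalso
      have : (0 : Fin 4 → ℝ) ∈ interior E := up (by simpa using ⟨hρ, h⟩)
      rw [closure_compl] at h0
      exact h0.2 this
    · exact h
    · exfalso
      have : (0 : Fin 4 → ℝ) ∈ interior Eᶜ := dn (by simpa using ⟨hρ, h⟩)
      rw [interior_compl] at this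
      exact this h0.1
  subst hd
  have hup : ∀ x y u t : ℝ, |x| < ρ → |y| < ρ → |t| < ρ → a * x + b * y + c * t < u →
      (![x, y, u, t] : Fin 4 → ℝ) ∈ interior E := by
    intro x y u t hx hy ht h
    apply up
    simpa using ⟨⟨hx, hy, ht⟩, h⟩
  have hdn : ∀ x y u t : ℝ, |x| < ρ → |y| < ρ → |t| < ρ → u < a * x + b * y + c * t →
      (![x, y, u, t] : Fin 4 → ℝ) ∈ interior Eᶜ := by
    intro x y u t hx hy ht h
    apply dn
    simpa using ⟨⟨hx, hy, ht⟩, h⟩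
  refine ⟨{w | |w 0| < ρ ∧ |w 1| < ρ ∧ |w 2| < ρ}, ?_, by simpa using hρ,
    a • LinearMap.proj 0 + b • LinearMap.proj 1 + c • LinearMap.proj 2, ?_, ?_, ?_⟩
  · apply IsOpen.and
    · exact isOpen_lt (by fun_prop) (by fun_prop)
    · apply IsOpen.and <;> exact isOpen_lt (by fun_prop) (by fun_prop)
  · rintro w ⟨w0, w1, w2⟩
    simp only [LinearMap.add_apply, LinearMap.smul_apply, LinearMap.proj_apply, smul_eq_mul]
    rw [frontier_eq_closure_inter_closure]
    have hdist : ∀ v v' ε : ℝ, 0 < ε → |v - v'| < ε →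
        dist (![w 0, w 1, v, w 2] : Fin 4 → ℝ) ![w 0, w 1, v', w 2] < ε := by
      intro v v' ε hε h
      rw [dist_pi_lt_iff hε]
      intro i
      fin_cases i <;> simp [Real.dist_eq, hε, h]
    constructor
    · rw [Metric.mem_closure_iff]
      intro ε hε
      refine ⟨![w 0, w 1, a * w 0 + b * w 1 + c * w 2 + ε / 2, w 2],
        interior_subset (hup _ _ _ _ w0 w1 w2 (by linarith)), hdist _ _ _ hε ?_⟩
      rw [abs_lt]; constructor <;> linarith
    · rw [Metric.mem_closure_iff]
      intro ε hε
      refine ⟨![w 0, w 1, a * w 0 + b * w 1 + c * w 2 - ε / 2, w 2],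
        interior_subset (hdn _ _ _ _ w0 w1 w2 (by linarith)), hdist _ _ _ hε ?_⟩
      rw [abs_lt]; constructor <;> linarith
  · rintro w ⟨w0, w1, w2⟩ u hu
    simp only [LinearMap.add_apply, LinearMap.smul_apply, LinearMap.proj_apply, smul_eq_mul] at hu
    exact hup _ _ _ _ w0 w1 w2 hu
  · rintro w ⟨w0, w1, w2⟩ u hu
    simp only [LinearMap.add_apply, LinearMap.smul_apply, LinearMap.proj_apply, smul_eq_mul] at hu
    exact hdn _ _ _ _ w0 w1 w2 hu
end
end

section
/- Let E ⊆ ℝ⁴ = ℍ×ℝ be precisely monotone. Assume the origin (0,0,0,0) ∈ ∂E, (0,0,1,0) ∈ Int(E), and that there exist real numbers a, b, c and an open neighborhood W of the origin in ℝ³ such that {(x,y,ax+by+ct,t) : (x,y,t) ∈ W} ⊆ ∂E, {(x,y,u,t) : (x,y,t) ∈ W and u > ax+by+ct} ⊆ Int(E), and {(x,y,u,t) : (x,y,t) ∈ W and u < ax+by+ct} ⊆ Int(ℝ⁴∖E). Then ∂E = {(x,y,u,t) ∈ ℝ⁴ : u = ax + by + ct}. -/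
/- The group `ℍ×ℝ`: `ℝ⁴` with coordinates `(x,y,u,t)` and law
`(x,y,u,t)·(x',y',u',t') = (x+x', y+y', u+u', t+t'+2(yx'−y'x))`. -/

noncomputable section

def GoodPt (E : Set (Fin 4 → ℝ)) (a b c x y t : ℝ) : Prop :=
  ∀ u : ℝ, (a * x + b * y + c * t < u → (![x, y, u, t] : Fin 4 → ℝ) ∈ E) ∧
    (u < a * x + b * y + c * t → (![x, y, u, t] : Fin 4 → ℝ) ∈ Eᶜ)

theorem hr_line (C : Set (Fin 4 → ℝ)) (hC : HRConvex C) (x y u t α β γ s₁ s₂ : ℝ)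
    (h1 : 0 < s₁) (h2 : s₁ < s₂) (hp : (![x, y, u, t] : Fin 4 → ℝ) ∈ C)
    (hq : (![x + s₂ * α, y + s₂ * β, u + s₂ * γ, t + 2 * s₂ * (y * α - x * β)] : Fin 4 → ℝ) ∈ C) :
    (![x + s₁ * α, y + s₁ * β, u + s₁ * γ, t + 2 * s₁ * (y * α - x * β)] : Fin 4 → ℝ) ∈ C := by
  have h2' : 0 < s₂ := h1.trans h2
  have key := hC _ hp (s₂ * α) (s₂ * β) (s₂ * γ) (by
    convert hq using 1
    ext i; fin_cases i <;> simp [hmul]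
    ring) (s₁ / s₂) (by positivity) ((div_le_one h2').2 h2.le)
  convert key using 1
  have e : ∀ z : ℝ, s₁ / s₂ * (s₂ * z) = s₁ * z := by intro z; field_simp
  rw [e, e, e]
  ext i; fin_cases i <;> simp [hmul]
  ring

theorem good_step (E : Set (Fin 4 → ℝ)) (hE : PreciselyMonotone E) (a b c x y t : ℝ)
    (α β s₁ s₂ : ℝ) (h1 : 0 < s₁) (h2 : s₁ < s₂)
    (g1 : GoodPt E a b c (x + s₁ * α) (y + s₁ * β) (t + 2 * s₁ * (y * α - x * β)))
    (g2 : GoodPt E a b c (x + s₂ * α) (y + s₂ * β) (t + 2 * s₂ * (y * α - x * β))) :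
    GoodPt E a b c x y t := by
  intro u
  obtain ⟨F, hF⟩ : ∃ F, F = u - (a * x + b * y + c * t) := ⟨_, rfl⟩
  obtain ⟨k, hk⟩ : ∃ k, k = 2 / (s₁ + s₂) := ⟨_, rfl⟩
  have hs : 0 < s₁ + s₂ := by linarith
  have k1 : 0 < 1 - s₁ * k := by
    rw [hk, sub_pos, mul_div_assoc', div_lt_one hs]; linarith
  have k2 : 1 - s₂ * k < 0 := by
    rw [hk, sub_neg, mul_div_assoc', one_lt_div hs]; linarith
  obtain ⟨γ, hγ⟩ : ∃ γ, γ = a * α + b * β + 2 * c * (y * α - x * β) - F * k := ⟨_, rfl⟩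
  have ev : ∀ s : ℝ, u + s * γ - (a * (x + s * α) + b * (y + s * β)
      + c * (t + 2 * s * (y * α - x * β))) = F * (1 - s * k) := by
    intro s; rw [hγ, hF]; ring
  constructor
  · intro hu
    have Fp : 0 < F := by linarith
    by_contra hn
    have q2 := (g2 (u + s₂ * γ)).2 (by have := ev s₂; nlinarith)
    have q1 := (g1 (u + s₁ * γ)).1 (by have := ev s₁; nlinarith)
    exact hr_line Eᶜ hE.2 x y u t α β γ s₁ s₂ h1 h2 hn q2 q1
  · intro hu hn
    have Fp : F < 0 := by linarith
    have q2 := (g2 (u + s₂ * γ)).1 (by have := ev s₂; nlinarith)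
    have q1 := (g1 (u + s₁ * γ)).2 (by have := ev s₁; nlinarith)
    exact q1 (hr_line E hE.1 x y u t α β γ s₁ s₂ h1 h2 hn q2)

theorem small_delta (r A B : ℝ) (hr : 0 < r) :
    ∃ δ : ℝ, 0 < δ ∧ δ < 1 ∧ |δ * A| < r ∧ |δ * B| < r := by
  have hD : 0 < r + 1 + |A| + |B| := by positivity
  have hA := abs_nonneg A
  have hB := abs_nonneg B
  refine ⟨r / (r + 1 + |A| + |B|), by positivity, ?_, ?_, ?_⟩
  · rw [div_lt_one hD]; linarith
  · rw [abs_mul, abs_of_pos (by positivity), div_mul_eq_mul_div, div_lt_iff₀ hD]; nlinarith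
  · rw [abs_mul, abs_of_pos (by positivity), div_mul_eq_mul_div, div_lt_iff₀ hD]; nlinarith

theorem good_all (E : Set (Fin 4 → ℝ)) (hE : PreciselyMonotone E) (a b c r : ℝ) (hr : 0 < r)
    (hg : ∀ x y t : ℝ, |x| < r → |y| < r → |t| < r → GoodPt E a b c x y t) (x y t : ℝ) :
    GoodPt E a b c x y t := by
  have slab : ∀ x y t : ℝ, |t| < r → GoodPt E a b c x y t := by
    intro x y t ht
    obtain ⟨δ, d0, d1, hx, hy⟩ := small_delta r x y hr
    refine good_step E hE a b c x y t (-x) (-y) (1 - δ) (1 + δ) (by linarith) (by linarith) ?_ ?_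
    · apply hg
      · convert hx using 2; ring
      · convert hy using 2; ring
      · convert ht using 2; ring
    · apply hg
      · rw [← abs_neg]; convert hx using 2; ring
      · rw [← abs_neg]; convert hy using 2; ring
      · convert ht using 2; ring
  have off : ∀ x y t : ℝ, 0 < x ^ 2 + y ^ 2 → GoodPt E a b c x y t := by
    intro x y t hxy
    obtain ⟨δ, d0, d1, ht, -⟩ := small_delta r t t hr
    obtain ⟨m, hm⟩ : ∃ m, m = t / (2 * (x ^ 2 + y ^ 2)) := ⟨_, rfl⟩
    have hm' : 2 * (y * (-(m * y)) - x * (m * x)) = - t := by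
      have : m * (2 * (x ^ 2 + y ^ 2)) = t := by rw [hm]; field_simp
      linarith
    refine good_step E hE a b c x y t (-(m * y)) (m * x) (1 - δ) (1 + δ) (by linarith)
      (by linarith) ?_ ?_
    · apply slab
      convert ht using 2; linear_combination (1 - δ) * hm'
    · apply slab
      rw [← abs_neg]; convert ht using 2; linear_combination -(1 + δ) * hm'
  by_cases h : 0 < x ^ 2 + y ^ 2
  · exact off x y t h
  · have hx : x = 0 := by nlinarith [sq_nonneg x, sq_nonneg y]
    have hy : y = 0 := by nlinarith [sq_nonneg x, sq_nonneg y]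
    subst hx hy
    refine good_step E hE a b c 0 0 t 1 0 1 2 (by norm_num) (by norm_num) ?_ ?_ <;>
      apply off <;> norm_num

/-- **Monotone `U`-epigraphs (global statement):** if near the origin the boundary of
`E` is the `u`-graph of `ax + by + ct` (with epigraph in `Int(E)` and ipograph in
`Int(Eᶜ)`), then `∂E` is the whole hyperplane `u = ax + by + ct`. -/
theorem monotone_U_epigraph_global
    (E : Set (Fin 4 → ℝ)) (hE : PreciselyMonotone E)
    (h0 : (0 : Fin 4 → ℝ) ∈ frontier E)
    (h1 : (![0, 0, 1, 0] : Fin 4 → ℝ) ∈ interior E)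
    (a b c : ℝ) (W : Set (Fin 3 → ℝ)) (hW : IsOpen W) (h0W : (0 : Fin 3 → ℝ) ∈ W)
    (hgr : ∀ w ∈ W,
      (![w 0, w 1, a * w 0 + b * w 1 + c * w 2, w 2] : Fin 4 → ℝ) ∈ frontier E)
    (hepi : ∀ w ∈ W, ∀ u : ℝ, a * w 0 + b * w 1 + c * w 2 < u →
      (![w 0, w 1, u, w 2] : Fin 4 → ℝ) ∈ interior E)
    (hipo : ∀ w ∈ W, ∀ u : ℝ, u < a * w 0 + b * w 1 + c * w 2 →
      (![w 0, w 1, u, w 2] : Fin 4 → ℝ) ∈ interior Eᶜ) :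
    frontier E = {v : Fin 4 → ℝ | v 2 = a * v 0 + b * v 1 + c * v 3} := by
  obtain ⟨r, hr, hrW⟩ := Metric.isOpen_iff.1 hW 0 h0W
  have hg : ∀ x y t : ℝ, GoodPt E a b c x y t := by
    refine good_all E hE a b c r hr ?_
    intro x y t hx hy ht u
    have hw : (![x, y, t] : Fin 3 → ℝ) ∈ W := by
      apply hrW
      rw [mem_ball_zero_iff, pi_norm_lt_iff hr]
      intro i
      fin_cases i <;> simpa
    exact ⟨fun h => interior_subset (hepi _ hw u (by simpa using h)),
      fun h => interior_subset (hipo _ hw u (by simpa using h))⟩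
  have eta : ∀ v : Fin 4 → ℝ, ![v 0, v 1, v 2, v 3] = v := by
    intro v; ext i; fin_cases i <;> rfl
  have hpos : {v : Fin 4 → ℝ | a * v 0 + b * v 1 + c * v 3 < v 2} ⊆ E := by
    intro v hv
    have := (hg (v 0) (v 1) (v 3) (v 2)).1 hv
    rwa [eta] at this
  have hneg : {v : Fin 4 → ℝ | v 2 < a * v 0 + b * v 1 + c * v 3} ⊆ Eᶜ := by
    intro v hv
    have := (hg (v 0) (v 1) (v 3) (v 2)).2 hv
    rwa [eta] at this
  have ipos := interior_maximal hpos (isOpen_lt (by fun_prop) (by fun_prop))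
  have ineg := interior_maximal hneg (isOpen_lt (by fun_prop) (by fun_prop))
  ext v
  constructor
  · intro hv
    rw [frontier_eq_closure_inter_closure, closure_compl] at hv
    have hc : v ∉ interior Eᶜ := by
      rw [interior_compl]; exact fun h => h hv.1
    rcases lt_trichotomy (v 2) (a * v 0 + b * v 1 + c * v 3) with h | h | h
    · exact absurd (ineg h) hc
    · exact h
    · exact absurd (ipos h) hv.2
  · intro hv
    have hv' : v 2 = a * v 0 + b * v 1 + c * v 3 := hv
    have hcont : Continuous fun s : ℝ => (![v 0, v 1, v 2 + s, v 3] : Fin 4 → ℝ) := by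
      refine continuous_pi fun i => ?_
      fin_cases i <;> simp <;> fun_prop
    have ht : Filter.Tendsto (fun s : ℝ => (![v 0, v 1, v 2 + s, v 3] : Fin 4 → ℝ))
        (nhds 0) (nhds v) := by
      have := hcont.tendsto 0
      simpa only [add_zero, eta] using this
    rw [frontier_eq_closure_inter_closure]
    constructor
    · refine mem_closure_of_tendsto (ht.mono_left (nhdsWithin_le_nhds (s := Set.Ioi 0))) ?_
      filter_upwards [self_mem_nhdsWithin] with s hs
      have hs' : 0 < s := hs
      exact (hg _ _ _ _).1 (by linarith)
    · refine mem_closure_of_tendsto (ht.mono_left (nhdsWithin_le_nhds (s := Set.Iio 0))) ?_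
      filter_upwards [self_mem_nhdsWithin] with s hs
      have hs' : s < 0 := hs
      exact (hg _ _ _ _).2 (by linarith)
end
end
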